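/- Suppose q1 and q2 are continuous real-valued potentials on [0,1] with q1(x) = q2(x) for all x ∈ [1/2,1], a is an admissible boundary pulse, and u1, u2 are classical solutions of the heat problem for q1 and q2 respectively, with the same boundary data a. If the fluxes at the left endpoint agree, i.e. ∂x u1(0,t) = ∂x u2(0,t) for all t > 0, then q1 = q2 on [0,1]. -/

import Mathlib

/-- An admissible boundary pulse: integrable on `(0,∞)`, vanishing beyond some
`T > 0`, and not almost everywhere zero. -/
def IsAdmissiblePulse (a : ℝ → ℝ) : Prop :=
  MeasureTheory.IntegrableOn a (Set.Ioi 0) ∧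
  (∃ T > (0:ℝ), ∀ t > T, a t = 0) ∧
  ¬ (a =ᵐ[MeasureTheory.volume.restrict (Set.Ioi 0)] 0)

/-- `u` (with partial derivatives `ux`, `uxx` in `x` and `ut` in `t`) is a
classical solution of `u_t = u_xx - q(x) u` on `[0,1] × (0,∞)` with zero initial
data, `u(0,t) = 0` and `u(1,t) = a(t)`. -/
def IsHeatSolution (q a : ℝ → ℝ) (u ux uxx ut : ℝ → ℝ → ℝ) : Prop :=
  ContinuousOn (fun p : ℝ × ℝ => u p.1 p.2) (Set.Icc 0 1 ×ˢ Set.Ici 0) ∧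
  (∀ t > (0:ℝ), ∀ x ∈ Set.Icc (0:ℝ) 1, HasDerivAt (fun y => u y t) (ux x t) x) ∧
  (∀ t > (0:ℝ), ∀ x ∈ Set.Icc (0:ℝ) 1, HasDerivAt (fun y => ux y t) (uxx x t) x) ∧
  (∀ t > (0:ℝ), ContinuousOn (fun x => uxx x t) (Set.Icc 0 1)) ∧
  (∀ x ∈ Set.Icc (0:ℝ) 1, ∀ t > (0:ℝ), HasDerivAt (fun s => u x s) (ut x t) t) ∧
  (∀ x ∈ Set.Icc (0:ℝ) 1, ContinuousOn (fun t => ut x t) (Set.Ioi 0)) ∧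
  (∀ x ∈ Set.Ioo (0:ℝ) 1, ∀ t > (0:ℝ), ut x t = uxx x t - q x * u x t) ∧
  (∀ x ∈ Set.Icc (0:ℝ) 1, u x 0 = 0) ∧
  (∀ t > (0:ℝ), u 0 t = 0 ∧ u 1 t = a t)

/-- Exponential growth bound `|u| + |u_x| ≤ C e^{c t}` on `[0,1] × [0,∞)`. -/
def HeatGrowthBound (u ux : ℝ → ℝ → ℝ) (C c : ℝ) : Prop :=
  ∀ x ∈ Set.Icc (0:ℝ) 1, ∀ t ∈ Set.Ici (0:ℝ), |u x t| + |ux x t| ≤ C * Real.exp (c * t)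

/-!
Let `y(s, x)` solve `y'' = (q + s) y` with `y = 0`, `y' = 1` at `x = 0`. The Laplace transforms of
the boundary value and of the left flux of a heat solution satisfy `â(s) = y(s, 1) f̂(s)`, by
Green's identity applied to time averages of the solution, which are twice differentiable in `x`
even though `u_xx` is not assumed jointly continuous. As `f̂ = 0` would force `a = 0`, equal pulses
and fluxes give equal characteristic functions `y₁(s, 1) = y₂(s, 1)`.

This is the setting of the Hochstadt–Lieberman theorem. Where the potentials agree, the Wronskian of
`y₁(s, ·)` and `y₂(s, ·)` is constant, so its value at `1` grows only like its value at `1/2`. Thus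
`y₁' - y₂'` at `1` is an entire function of `s` of order `1/2` that is bounded as `s → -∞` and
decays as `s → +∞`, and it vanishes by Phragmén–Lindelöf. Hence `y₁` and `y₂` have the same Cauchy
data at `1/2`, and the same growth argument on `[0, 1/2]` identifies the potentials there.
-/

open Set Filter Topology MeasureTheory BoundedContinuousFunction
open scoped FourierTransform

section ParametricIntegrals

variable {𝕜 : Type*} [RCLike 𝕜] {E : Type*} [NormedAddCommGroup E] [NormedSpace 𝕜 E]

/-- `f' s x` is the derivative of `f s x` in the parameter `s`, and both are jointly continuous:
the regularity under which one may differentiate `∫ f s x dx` in `s`. -/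
structure HasContinuousParamDeriv (f f' : 𝕜 → ℝ → E) : Prop where
  continuous : Continuous (Function.uncurry f)
  continuous_deriv : Continuous (Function.uncurry f')
  hasDerivAt : ∀ s x, HasDerivAt (fun σ => f σ x) (f' s x) s

theorem HasContinuousParamDeriv.const {g : ℝ → E} (hg : Continuous g) :
    HasContinuousParamDeriv (fun (_ : 𝕜) x => g x) (fun _ _ => 0) :=
  ⟨hg.comp continuous_snd, continuous_const, fun _ _ => hasDerivAt_const _ _⟩

theorem HasContinuousParamDeriv.hasDerivAt_intervalIntegral [NormedSpace ℝ E] {f f' : 𝕜 → ℝ → E}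
    (h : HasContinuousParamDeriv f f') (a b : ℝ) (s : 𝕜) :
    HasDerivAt (fun σ => ∫ x in a..b, f σ x) (∫ x in a..b, f' s x) s := by
  have continuous_slice : ∀ {g : 𝕜 → ℝ → E}, Continuous (Function.uncurry g) →
      ∀ σ, Continuous (g σ) := fun hg σ => hg.comp (Continuous.prodMk_right σ)
  obtain ⟨B, hB⟩ := ((isCompact_closedBall s 1).prod isCompact_uIcc).exists_bound_of_continuousOn
    h.continuous_deriv.continuousOn
  refine (intervalIntegral.hasDerivAt_integral_of_dominated_loc_of_deriv_le
    (bound := fun _ => B) (Metric.closedBall_mem_nhds s one_pos)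
    (.of_forall fun σ => (continuous_slice h.continuous σ).aestronglyMeasurable)
    ((continuous_slice h.continuous s).intervalIntegrable a b)
    (continuous_slice h.continuous_deriv s).aestronglyMeasurable
    (.of_forall fun x hx σ hσ => hB (σ, x) ⟨hσ, uIoc_subset_uIcc hx⟩)
    intervalIntegrable_const (.of_forall fun x _ σ _ => h.hasDerivAt σ x)).2

theorem HasContinuousParamDeriv.integral [NormedSpace ℝ E] {f f' : 𝕜 → ℝ → E}
    (h : HasContinuousParamDeriv f f') (a : ℝ) :
    HasContinuousParamDeriv (fun s x => ∫ t in a..x, f s t) (fun s x => ∫ t in a..x, f' s t) where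
  continuous := intervalIntegral.continuous_parametric_intervalIntegral_of_continuous
    (f := fun (p : 𝕜 × ℝ) t => f p.1 t)
    (h.continuous.comp (by fun_prop : Continuous fun p : (𝕜 × ℝ) × ℝ => (p.1.1, p.2)))
    continuous_snd
  continuous_deriv := intervalIntegral.continuous_parametric_intervalIntegral_of_continuous
    (f := fun (p : 𝕜 × ℝ) t => f' p.1 t)
    (h.continuous_deriv.comp (by fun_prop : Continuous fun p : (𝕜 × ℝ) × ℝ => (p.1.1, p.2)))
    continuous_snd
  hasDerivAt s x := h.hasDerivAt_intervalIntegral a x s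

theorem HasContinuousParamDeriv.clm_apply {F : Type*} [NormedAddCommGroup F] [NormedSpace 𝕜 F]
    {A A' : 𝕜 → ℝ → E →L[𝕜] F} {f f' : 𝕜 → ℝ → E}
    (hA : HasContinuousParamDeriv A A') (hf : HasContinuousParamDeriv f f') :
    HasContinuousParamDeriv (fun s x => A s x (f s x))
      (fun s x => A' s x (f s x) + A s x (f' s x)) where
  continuous := hA.continuous.clm_apply hf.continuous
  continuous_deriv := (hA.continuous_deriv.clm_apply hf.continuous).add
    (hA.continuous.clm_apply hf.continuous_deriv)
  hasDerivAt s x := (hA.hasDerivAt s x).clm_apply (hf.hasDerivAt s x)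

end ParametricIntegrals

section LinearODE

variable {E : Type*} [NormedAddCommGroup E] [NormedSpace ℂ E]

/-- The `n`-th term of the Picard series of the solution of `Y' = A Y`, `Y x₀ = v`. -/
noncomputable def picardTerm (A : ℝ → E →L[ℂ] E) (x₀ : ℝ) (v : E) : ℕ → ℝ → E
  | 0, _ => v
  | n + 1, x => ∫ t in x₀..x, A t (picardTerm A x₀ v n t)

/-- The solution of `Y' = A Y`, `Y x₀ = v`, as the sum of its Picard series; meaningful when `A` is
continuous and bounded. -/
noncomputable def linearFlow (A : ℝ → E →L[ℂ] E) (x₀ : ℝ) (v : E) (x : ℝ) : E :=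
  ∑' n, picardTerm A x₀ v n x

variable {A : ℝ → E →L[ℂ] E} {K : ℝ} (x₀ : ℝ) (v : E)

theorem continuous_picardTerm (hA : Continuous A) (n : ℕ) : Continuous (picardTerm A x₀ v n) := by
  induction n with
  | zero => exact continuous_const
  | succ n ih =>
    exact intervalIntegral.continuous_primitive
      (fun _ _ => (hA.clm_apply ih).intervalIntegrable (μ := volume) _ _) x₀

theorem norm_picardTerm_le (hK : ∀ x, ‖A x‖ ≤ K) (n : ℕ) (x : ℝ) :
    ‖picardTerm A x₀ v n x‖ ≤ ‖v‖ * ((K * |x - x₀|) ^ n / n.factorial) := by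
  induction n generalizing x with
  | zero => simp [picardTerm]
  | succ n ih =>
    have hbound : ∀ t, ‖A t (picardTerm A x₀ v n t)‖ ≤
        ‖v‖ * (K ^ (n + 1) / n.factorial) * |t - x₀| ^ n := fun t => calc
      _ ≤ K * (‖v‖ * ((K * |t - x₀|) ^ n / n.factorial)) :=
        (A t).le_of_opNorm_le_of_le (hK t) (ih t)
      _ = _ := by ring
    calc ‖picardTerm A x₀ v (n + 1) x‖
        ≤ ∫ t in uIoc x₀ x, ‖v‖ * (K ^ (n + 1) / n.factorial) * |t - x₀| ^ n := by
          rw [picardTerm, intervalIntegral.norm_intervalIntegral_eq]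
          refine norm_integral_le_of_norm_le ?_ (.of_forall hbound)
          exact (intervalIntegrable_iff.1 (Continuous.intervalIntegrable (by fun_prop) _ _))
      _ = _ := by
          rw [integral_const_mul, integral_pow_abs_sub_uIoc, Nat.factorial_succ]
          push_cast
          field_simp
          ring

theorem hasDerivAt_picardTerm_succ [CompleteSpace E] (hA : Continuous A) (n : ℕ) (x : ℝ) :
    HasDerivAt (picardTerm A x₀ v (n + 1)) (A x (picardTerm A x₀ v n x)) x :=
  (hA.clm_apply (continuous_picardTerm x₀ v hA n)).integral_hasStrictDerivAt x₀ x |>.hasDerivAt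

theorem summable_picardTerm [CompleteSpace E] (hK : ∀ x, ‖A x‖ ≤ K) (x : ℝ) :
    Summable fun n => picardTerm A x₀ v n x :=
  .of_norm_bounded ((Real.summable_pow_div_factorial _).mul_left _)
    (norm_picardTerm_le x₀ v hK · x)

theorem linearFlow_self : linearFlow A x₀ v x₀ = v := by
  rw [linearFlow, tsum_eq_single 0 fun n hn => ?_, picardTerm]
  obtain ⟨m, rfl⟩ := Nat.exists_eq_succ_of_ne_zero hn
  exact intervalIntegral.integral_same

theorem hasDerivAt_linearFlow [CompleteSpace E] (hA : Continuous A) (hK : ∀ x, ‖A x‖ ≤ K) (x : ℝ) :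
    HasDerivAt (linearFlow A x₀ v) (A x (linearFlow A x₀ v x)) x := by
  have hK₀ : 0 ≤ K := (norm_nonneg _).trans (hK x)
  set R := |x - x₀| + 1
  have hx : x ∈ Metric.ball x₀ R := by simp [R, Real.dist_eq]
  have hderiv : HasDerivAt (fun y => ∑' n, picardTerm A x₀ v (n + 1) y)
      (∑' n, A x (picardTerm A x₀ v n x)) x := by
    refine hasDerivAt_tsum_of_isPreconnected (t := Metric.ball x₀ R) (y₀ := x)
      (((Real.summable_pow_div_factorial (K * R)).mul_left ‖v‖).mul_left K) Metric.isOpen_ball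
      (convex_ball x₀ R).isPreconnected
      (fun n y _ => hasDerivAt_picardTerm_succ x₀ v hA n y) (fun n y hy => ?_) hx
      ((summable_nat_add_iff 1).2 (summable_picardTerm x₀ v hK x)) hx
    refine (A y).le_of_opNorm_le_of_le (hK y) ((norm_picardTerm_le x₀ v hK n y).trans ?_)
    have : |y - x₀| ≤ R := (Metric.mem_ball.1 hy).le
    gcongr
  have hsplit : linearFlow A x₀ v = fun y => v + ∑' n, picardTerm A x₀ v (n + 1) y :=
    funext fun y => (summable_picardTerm x₀ v hK y).tsum_eq_zero_add
  rw [← (A x).map_tsum (summable_picardTerm x₀ v hK x)] at hderiv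
  exact (hderiv.const_add v).congr_of_eventuallyEq (.of_forall (congrFun hsplit))

theorem exists_hasContinuousParamDeriv_picardTerm {A A' : ℂ → ℝ → E →L[ℂ] E}
    (hA : HasContinuousParamDeriv A A') (n : ℕ) :
    ∃ f', HasContinuousParamDeriv (fun s => picardTerm (A s) x₀ v n) f' := by
  induction n with
  | zero => exact ⟨_, .const continuous_const⟩
  | succ n ih =>
    obtain ⟨f', hf'⟩ := ih
    exact ⟨_, (hA.clm_apply hf').integral x₀⟩

theorem differentiable_linearFlow [CompleteSpace E] {A A' : ℂ → ℝ → E →L[ℂ] E}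
    (hA : HasContinuousParamDeriv A A')
    (hbdd : ∀ R, ∃ K, ∀ s ∈ Metric.ball (0 : ℂ) R, ∀ x, ‖A s x‖ ≤ K) (x : ℝ) :
    Differentiable ℂ fun s => linearFlow (A s) x₀ v x := by
  intro s
  obtain ⟨K, hK⟩ := hbdd (‖s‖ + 1)
  refine (Complex.differentiableOn_tsum_of_summable_norm
    ((Real.summable_pow_div_factorial (K * |x - x₀|)).mul_left ‖v‖)
    (fun n σ _ => ?_) Metric.isOpen_ball
    (fun n σ hσ => norm_picardTerm_le x₀ v (hK σ hσ) n x)).differentiableAt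
    (Metric.isOpen_ball.mem_nhds (by simp : s ∈ Metric.ball 0 (‖s‖ + 1)))
  obtain ⟨f', hf'⟩ := exists_hasContinuousParamDeriv_picardTerm x₀ v hA n
  exact (hf'.hasDerivAt σ x).differentiableAt.differentiableWithinAt

end LinearODE

section Schrodinger

theorem norm_le_mul_exp_of_norm_deriv_le {E : Type*} [NormedAddCommGroup E] [NormedSpace ℝ E]
    {f f' : ℝ → E} {K x₀ x : ℝ} (hf : ∀ t ∈ uIcc x₀ x, HasDerivAt f (f' t) t)
    (hf' : ∀ t ∈ uIcc x₀ x, ‖f' t‖ ≤ K * ‖f t‖) :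
    ‖f x‖ ≤ ‖f x₀‖ * Real.exp (K * |x - x₀|) := by
  rcases le_total x₀ x with h | h
  · rw [uIcc_of_le h] at hf hf'
    have := norm_le_gronwallBound_of_norm_deriv_right_le (ε := 0)
      (fun t ht => (hf t ht).continuousAt.continuousWithinAt)
      (fun t ht => (hf t (Ico_subset_Icc_self ht)).hasDerivWithinAt) le_rfl
      (fun t ht => by simpa using hf' t (Ico_subset_Icc_self ht)) x ⟨h, le_rfl⟩
    rwa [gronwallBound_ε0, ← abs_of_nonneg (sub_nonneg.2 h)] at this
  · rw [uIcc_of_ge h] at hf hf'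
    have hmem : ∀ t ∈ Icc (-x₀) (-x), -t ∈ Icc x x₀ := fun t ht =>
      ⟨le_neg.1 ht.2, neg_le.1 ht.1⟩
    have hg : ∀ t ∈ Icc (-x₀) (-x), HasDerivAt (fun t => f (-t)) (-f' (-t)) t := fun t ht => by
      simpa [Function.comp_def] using (hf _ (hmem t ht)).scomp t (hasDerivAt_neg t)
    have := norm_le_gronwallBound_of_norm_deriv_right_le (ε := 0)
      (fun t ht => (hg t ht).continuousAt.continuousWithinAt)
      (fun t ht => (hg t (Ico_subset_Icc_self ht)).hasDerivWithinAt) le_rfl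
      (fun t ht => by simpa using hf' _ (hmem t (Ico_subset_Icc_self ht))) (-x)
      ⟨neg_le_neg h, le_rfl⟩
    rwa [gronwallBound_ε0, neg_neg, neg_neg, show -x - -x₀ = |x - x₀| by
      rw [abs_of_nonpos (sub_nonpos.2 h)]; ring] at this

/-- `y` solves `y'' = (q + s) y` with `y' = z` at the points of `S`. -/
structure IsSchrodingerSolOn (q : ℝ → ℝ) (s : ℂ) (S : Set ℝ) (y z : ℝ → ℂ) : Prop where
  hasDerivAt : ∀ x ∈ S, HasDerivAt y (z x) x
  hasDerivAt_deriv : ∀ x ∈ S, HasDerivAt z ((q x + s) * y x) x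

namespace IsSchrodingerSolOn

variable {q q₁ q₂ : ℝ → ℝ} {s : ℂ} {S : Set ℝ} {y z y₁ z₁ y₂ z₂ : ℝ → ℂ}

theorem congr (h : IsSchrodingerSolOn q₁ s S y z) (hq : EqOn q₁ q₂ S) :
    IsSchrodingerSolOn q₂ s S y z :=
  ⟨h.1, fun x hx => hq hx ▸ h.2 x hx⟩

theorem sub (h₁ : IsSchrodingerSolOn q s S y₁ z₁) (h₂ : IsSchrodingerSolOn q s S y₂ z₂) :
    IsSchrodingerSolOn q s S (y₁ - y₂) (z₁ - z₂) where
  hasDerivAt x hx := (h₁.1 x hx).sub (h₂.1 x hx)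
  hasDerivAt_deriv x hx := by
    simpa only [Pi.sub_apply, mul_sub] using (h₁.2 x hx).sub (h₂.2 x hx)

theorem linearCombination (h₁ : IsSchrodingerSolOn q s S y₁ z₁)
    (h₂ : IsSchrodingerSolOn q s S y₂ z₂) (a b : ℂ) :
    IsSchrodingerSolOn q s S (fun x => a * y₁ x + b * y₂ x) (fun x => a * z₁ x + b * z₂ x) where
  hasDerivAt x hx := ((h₁.1 x hx).const_mul a).add ((h₂.1 x hx).const_mul b)
  hasDerivAt_deriv x hx :=
    (((h₁.2 x hx).const_mul a).add ((h₂.2 x hx).const_mul b)).congr_deriv (by ring)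

theorem hasDerivAt_wronskian (h₁ : IsSchrodingerSolOn q₁ s S y₁ z₁)
    (h₂ : IsSchrodingerSolOn q₂ s S y₂ z₂) {x : ℝ} (hx : x ∈ S) :
    HasDerivAt (fun x => y₁ x * z₂ x - z₁ x * y₂ x) ((q₂ x - q₁ x) * (y₁ x * y₂ x)) x :=
  (((h₁.1 x hx).mul (h₂.2 x hx)).sub ((h₁.2 x hx).mul (h₂.1 x hx))).congr_deriv (by ring)

theorem wronskian_eq {a b : ℝ} (h₁ : IsSchrodingerSolOn q s (uIcc a b) y₁ z₁)
    (h₂ : IsSchrodingerSolOn q s (uIcc a b) y₂ z₂) :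
    y₁ b * z₂ b - z₁ b * y₂ b = y₁ a * z₂ a - z₁ a * y₂ a := by
  have := (convex_uIcc a b).norm_image_sub_le_of_norm_hasDerivWithin_le (C := 0)
    (fun x hx => (h₁.hasDerivAt_wronskian h₂ hx).hasDerivWithinAt) (fun x _ => by simp)
    left_mem_uIcc right_mem_uIcc
  simpa [sub_eq_zero] using this

end IsSchrodingerSolOn

section BoundedPotential

variable {q : ℝ →ᵇ ℝ} {s : ℂ} {y z y₁ z₁ y₂ z₂ : ℝ → ℂ} {x₀ x : ℝ}

theorem IsSchrodingerSolOn.energy_le {κ : ℝ} (hκ : 0 < κ)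
    (h : IsSchrodingerSolOn q s (uIcc x₀ x) y z) :
    ‖z x‖ ^ 2 + κ ^ 2 * ‖y x‖ ^ 2 ≤ (‖z x₀‖ ^ 2 + κ ^ 2 * ‖y x₀‖ ^ 2) *
      Real.exp ((‖q‖ + ‖s + κ ^ 2‖) / κ * |x - x₀|) := by
  set energy : ℝ → ℝ := fun t => ‖z t‖ ^ 2 + κ ^ 2 * ‖y t‖ ^ 2
  have henergy : ∀ t, ‖energy t‖ = energy t := fun t => Real.norm_of_nonneg (by positivity)
  have hderiv : ∀ t ∈ uIcc x₀ x,
      HasDerivAt energy (2 * inner ℝ (z t) ((q t + s + κ ^ 2) * y t)) t := fun t ht => by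
    refine ((h.2 t ht).norm_sq.add ((h.1 t ht).norm_sq.const_mul (κ ^ 2))).congr_deriv ?_
    have : (κ : ℂ) ^ 2 * y t = κ ^ 2 • y t := by simp
    rw [add_mul _ ((κ : ℂ) ^ 2), inner_add_right, this, inner_smul_right,
      real_inner_comm (y t)]
    ring
  have hbound : ∀ t ∈ uIcc x₀ x, ‖2 * inner ℝ (z t) ((q t + s + κ ^ 2) * y t)‖ ≤
      (‖q‖ + ‖s + κ ^ 2‖) / κ * ‖energy t‖ := fun t _ => by
    have hpot : ‖(q t + s + κ ^ 2 : ℂ)‖ ≤ ‖q‖ + ‖s + κ ^ 2‖ := by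
      rw [add_assoc]
      exact (norm_add_le _ _).trans (add_le_add_left (by simpa using q.norm_coe_le_norm t) _)
    have hinner := (norm_inner_le_norm (𝕜 := ℝ) (z t) ((q t + s + κ ^ 2) * y t)).trans
      (mul_le_mul_of_nonneg_left (norm_mul_le_of_le hpot le_rfl) (norm_nonneg _))
    have amgm : 2 * (‖z t‖ * ‖y t‖) ≤ energy t / κ := by
      rw [le_div_iff₀ hκ]
      nlinarith [sq_nonneg (‖z t‖ - κ * ‖y t‖)]
    calc _ ≤ 2 * (‖z t‖ * ((‖q‖ + ‖s + κ ^ 2‖) * ‖y t‖)) := by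
            rw [norm_mul, Real.norm_two]; gcongr
      _ = (‖q‖ + ‖s + κ ^ 2‖) * (2 * (‖z t‖ * ‖y t‖)) := by ring
      _ ≤ (‖q‖ + ‖s + κ ^ 2‖) * (energy t / κ) := by gcongr
      _ = _ := by rw [henergy]; ring
  simpa only [henergy] using norm_le_mul_exp_of_norm_deriv_le hderiv hbound

theorem IsSchrodingerSolOn.eq_of_eq (h₁ : IsSchrodingerSolOn q s (uIcc x₀ x) y₁ z₁)
    (h₂ : IsSchrodingerSolOn q s (uIcc x₀ x) y₂ z₂) (hy : y₁ x₀ = y₂ x₀) (hz : z₁ x₀ = z₂ x₀) :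
    y₁ x = y₂ x ∧ z₁ x = z₂ x := by
  have := (h₁.sub h₂).energy_le one_pos
  simp only [Pi.sub_apply, hy, hz, sub_self, norm_zero, one_pow, one_mul, ne_eq,
    OfNat.ofNat_ne_zero, not_false_eq_true, zero_pow, add_zero, zero_mul] at this
  constructor <;> rw [← sub_eq_zero, ← norm_eq_zero, ← sq_eq_zero_iff] <;>
    nlinarith [sq_nonneg ‖y₁ x - y₂ x‖, sq_nonneg ‖z₁ x - z₂ x‖]

/-- The matrix of the first-order system `(y, y')' = (y', p y)`. -/
noncomputable def companion (p : ℂ) : ℂ × ℂ →L[ℂ] ℂ × ℂ :=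
  .inl ℂ ℂ ℂ ∘L .snd ℂ ℂ ℂ + p • .inr ℂ ℂ ℂ ∘L .fst ℂ ℂ ℂ

theorem companion_apply (p : ℂ) (v : ℂ × ℂ) : companion p v = (v.2, p * v.1) := by
  ext <;> simp [companion]

theorem hasContinuousParamDeriv_companion (q : ℝ →ᵇ ℝ) :
    HasContinuousParamDeriv (fun (s : ℂ) x => companion (q x + s))
      (fun _ _ => .inr ℂ ℂ ℂ ∘L .fst ℂ ℂ ℂ) where
  continuous := by
    unfold companion Function.uncurry
    fun_prop
  continuous_deriv := continuous_const
  hasDerivAt s x := by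
    simpa [companion] using (((hasDerivAt_id s).const_add (q x : ℂ)).smul_const
      (ContinuousLinearMap.inr ℂ ℂ ℂ ∘L .fst ℂ ℂ ℂ)).const_add (.inl ℂ ℂ ℂ ∘L .snd ℂ ℂ ℂ)

theorem norm_companion_le (q : ℝ →ᵇ ℝ) (s : ℂ) (x : ℝ) : ‖companion (q x + s)‖ ≤
    1 + (‖q‖ + ‖s‖) := by
  refine ContinuousLinearMap.opNorm_le_bound _ (by positivity) fun v => ?_
  have hpot : ‖(q x + s : ℂ)‖ ≤ ‖q‖ + ‖s‖ := norm_add_le_of_le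
    (by simpa using q.norm_coe_le_norm x) le_rfl
  rw [companion_apply, Prod.norm_mk, sup_le_iff, add_mul, one_mul]
  exact ⟨(norm_snd_le v).trans (le_add_of_nonneg_right (by positivity)),
    ((norm_mul_le_of_le hpot (norm_fst_le v))).trans (le_add_of_nonneg_left (norm_nonneg v))⟩

/-- The solution of `y'' = (q + s) y` with Cauchy data `(y, y') = v` at `x₀`. -/
noncomputable def schrodingerSol (q : ℝ →ᵇ ℝ) (x₀ : ℝ) (v : ℂ × ℂ) (s : ℂ) (x : ℝ) : ℂ :=
  (linearFlow (fun t => companion (q t + s)) x₀ v x).1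

/-- The derivative in `x` of `schrodingerSol q x₀ v s`. -/
noncomputable def schrodingerSolDeriv (q : ℝ →ᵇ ℝ) (x₀ : ℝ) (v : ℂ × ℂ) (s : ℂ) (x : ℝ) : ℂ :=
  (linearFlow (fun t => companion (q t + s)) x₀ v x).2

@[simp] theorem schrodingerSol_self (q : ℝ →ᵇ ℝ) (x₀ : ℝ) (v : ℂ × ℂ) (s : ℂ) :
    schrodingerSol q x₀ v s x₀ = v.1 :=
  congrArg Prod.fst (linearFlow_self x₀ v)

@[simp] theorem schrodingerSolDeriv_self (q : ℝ →ᵇ ℝ) (x₀ : ℝ) (v : ℂ × ℂ) (s : ℂ) :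
    schrodingerSolDeriv q x₀ v s x₀ = v.2 :=
  congrArg Prod.snd (linearFlow_self x₀ v)

theorem isSchrodingerSolOn_schrodingerSol (q : ℝ →ᵇ ℝ) (x₀ : ℝ) (v : ℂ × ℂ) (s : ℂ) (S : Set ℝ) :
    IsSchrodingerSolOn q s S (schrodingerSol q x₀ v s) (schrodingerSolDeriv q x₀ v s) := by
  have h : ∀ x, HasDerivAt (linearFlow (fun t => companion (q t + s)) x₀ v)
      (schrodingerSolDeriv q x₀ v s x, (q x + s) * schrodingerSol q x₀ v s x) x := fun x => by
    have := hasDerivAt_linearFlow x₀ v (A := fun t => companion (q t + s))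
      ((hasContinuousParamDeriv_companion q).continuous.comp (Continuous.prodMk_right s))
      (norm_companion_le q s) x
    rwa [companion_apply] at this
  exact ⟨fun x _ => (h x).fst, fun x _ => (h x).snd⟩

theorem continuous_schrodingerSol (q : ℝ →ᵇ ℝ) (x₀ : ℝ) (v : ℂ × ℂ) (s : ℂ) :
    Continuous (schrodingerSol q x₀ v s) :=
  continuous_iff_continuousAt.2 fun x =>
    ((isSchrodingerSolOn_schrodingerSol q x₀ v s univ).hasDerivAt x (mem_univ x)).continuousAt

theorem differentiable_linearFlow_companion (q : ℝ →ᵇ ℝ) (x₀ : ℝ) (v : ℂ × ℂ) (x : ℝ) :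
    Differentiable ℂ fun s => linearFlow (fun t => companion (q t + s)) x₀ v x :=
  differentiable_linearFlow x₀ v (hasContinuousParamDeriv_companion q)
    (fun R => ⟨1 + (‖q‖ + R), fun s hs t => (norm_companion_le q s t).trans
      (by gcongr; exact (mem_ball_zero_iff.1 hs).le)⟩) x

theorem differentiable_schrodingerSol (q : ℝ →ᵇ ℝ) (x₀ : ℝ) (v : ℂ × ℂ) (x : ℝ) :
    Differentiable ℂ fun s => schrodingerSol q x₀ v s x :=
  (differentiable_linearFlow_companion q x₀ v x).fst

theorem differentiable_schrodingerSolDeriv (q : ℝ →ᵇ ℝ) (x₀ : ℝ) (v : ℂ × ℂ) (x : ℝ) :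
    Differentiable ℂ fun s => schrodingerSolDeriv q x₀ v s x :=
  (differentiable_linearFlow_companion q x₀ v x).snd

end BoundedPotential
end Schrodinger

section PhragmenLindelof

/-- Entire functions `f` of order at most `1/2` and finite type that are bounded on the negative
real axis, both conditions being expressed through `s = w ^ 2`. An element of this class that tends
to zero along the positive axis vanishes. -/
structure IsHalfOrderEntire (f : ℂ → ℂ) : Prop where
  differentiable : Differentiable ℂ f
  growth : ∃ B R : ℝ, ∀ w : ℂ, ‖f (w ^ 2)‖ ≤ B * Real.exp (R * ‖w‖)
  bounded_neg : ∃ C : ℝ, ∀ k : ℝ, ‖f (-(k : ℂ) ^ 2)‖ ≤ C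

namespace IsHalfOrderEntire

variable {f g : ℂ → ℂ}

theorem sub (hf : IsHalfOrderEntire f) (hg : IsHalfOrderEntire g) :
    IsHalfOrderEntire fun s => f s - g s where
  differentiable := hf.differentiable.sub hg.differentiable
  growth := by
    obtain ⟨⟨B, R, hB⟩, B', R', hB'⟩ := And.intro hf.growth hg.growth
    refine ⟨|B| + |B'|, max R R', fun w => (norm_sub_le_of_le (hB w) (hB' w)).trans ?_⟩
    rw [add_mul]
    gcongr
    exacts [le_abs_self B, le_max_left R R', le_abs_self B', le_max_right R R']
  bounded_neg := by
    obtain ⟨⟨C, hC⟩, C', hC'⟩ := And.intro hf.bounded_neg hg.bounded_neg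
    exact ⟨C + C', fun k => norm_sub_le_of_le (hC k) (hC' k)⟩

theorem mul (hf : IsHalfOrderEntire f) (hg : IsHalfOrderEntire g) :
    IsHalfOrderEntire fun s => f s * g s where
  differentiable := hf.differentiable.mul hg.differentiable
  growth := by
    obtain ⟨⟨B, R, hB⟩, B', R', hB'⟩ := And.intro hf.growth hg.growth
    refine ⟨B * B', R + R', fun w => (norm_mul_le_of_le (hB w) (hB' w)).trans_eq ?_⟩
    rw [add_mul, Real.exp_add]
    ring
  bounded_neg := by
    obtain ⟨⟨C, hC⟩, C', hC'⟩ := And.intro hf.bounded_neg hg.bounded_neg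
    exact ⟨C * C', fun k => norm_mul_le_of_le (hC k) (hC' k)⟩

theorem norm_sq_le_of_tendsto (hf : IsHalfOrderEntire f) {C : ℝ}
    (hC : ∀ k : ℝ, ‖f (-(k : ℂ) ^ 2)‖ ≤ C)
    (hlim : Tendsto (fun k : ℝ => f ((k : ℂ) ^ 2)) atTop (𝓝 0)) {w : ℂ} (hw : 0 ≤ w.re) :
    ‖f (w ^ 2)‖ ≤ C := by
  obtain ⟨B, R, hB⟩ := hf.growth
  refine PhragmenLindelof.right_half_plane_of_tendsto_zero_on_real (f := fun w => f (w ^ 2))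
    (hf.differentiable.comp (differentiable_id.pow 2)).diffContOnCl ⟨1, one_lt_two, R, ?_⟩ hlim
    (fun x => ?_) hw
  · refine .of_bound B (.of_forall fun z => ?_)
    simpa only [Real.rpow_one, Real.norm_of_nonneg (Real.exp_nonneg _)] using hB z
  · simpa only [mul_pow, Complex.I_sq, mul_neg_one] using hC x

theorem eq_zero_of_tendsto (hf : IsHalfOrderEntire f)
    (hlim : Tendsto (fun k : ℝ => f ((k : ℂ) ^ 2)) atTop (𝓝 0)) (s : ℂ) : f s = 0 := by
  obtain ⟨C, hC⟩ := hf.bounded_neg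
  have bounded : ∀ s, ‖f s‖ ≤ C := fun s => by
    obtain ⟨w, rfl⟩ := IsAlgClosed.exists_pow_nat_eq s two_pos
    rcases le_total 0 w.re with hw | hw
    · exact hf.norm_sq_le_of_tendsto hC hlim hw
    · rw [← neg_sq]
      exact hf.norm_sq_le_of_tendsto hC hlim (by simpa using hw)
  have constant := hf.differentiable.apply_eq_apply_of_bounded
    (isBounded_iff_forall_norm_le.2 ⟨C, forall_mem_range.2 bounded⟩)
  exact tendsto_nhds_unique (tendsto_const_nhds.congr fun k : ℝ => constant s ((k : ℂ) ^ 2)) hlim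

theorem eq_zero_of_norm_le (hf : IsHalfOrderEntire f) {C k₀ : ℝ}
    (h : ∀ k ≥ k₀, ‖f ((k : ℂ) ^ 2)‖ ≤ C / k) (s : ℂ) : f s = 0 :=
  hf.eq_zero_of_tendsto (squeeze_zero_norm' ((eventually_ge_atTop k₀).mono h)
    (tendsto_const_nhds.div_atTop tendsto_id)) s

end IsHalfOrderEntire

/-- The exponential rate in the energy estimate `IsSchrodingerSolOn.energy_le` at `s = w ^ 2` with
the weight `κ = ‖w‖ + 1`, a choice that serves large `s` and the negative axis alike. -/
noncomputable def energyRate (q : ℝ →ᵇ ℝ) (w : ℂ) : ℝ :=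
  (‖q‖ + ‖w ^ 2 + ((‖w‖ + 1 : ℝ) : ℂ) ^ 2‖) / (‖w‖ + 1)

variable (q : ℝ →ᵇ ℝ) (x₀ x : ℝ)

theorem norm_sq_schrodingerSol_le (v : ℂ × ℂ) (w : ℂ) :
    ‖schrodingerSol q x₀ v (w ^ 2) x‖ ^ 2 ≤ (‖v.2‖ ^ 2 + ‖v.1‖ ^ 2) *
      Real.exp (energyRate q w * |x - x₀|) := by
  have henergy := (isSchrodingerSolOn_schrodingerSol q x₀ v (w ^ 2) (uIcc x₀ x)).energy_le
    (by positivity : 0 < ‖w‖ + 1)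
  rw [schrodingerSol_self, schrodingerSolDeriv_self] at henergy
  set e := Real.exp _
  have hκ : 1 ≤ (‖w‖ + 1) ^ 2 := one_le_pow₀ (by linarith [norm_nonneg w])
  refine le_of_mul_le_mul_left ?_ (zero_lt_one.trans_le hκ)
  calc (‖w‖ + 1) ^ 2 * ‖schrodingerSol q x₀ v (w ^ 2) x‖ ^ 2
      ≤ (‖v.2‖ ^ 2 + (‖w‖ + 1) ^ 2 * ‖v.1‖ ^ 2) * e :=
        (le_add_of_nonneg_left (sq_nonneg _)).trans henergy
    _ ≤ ((‖w‖ + 1) ^ 2 * ‖v.2‖ ^ 2 + (‖w‖ + 1) ^ 2 * ‖v.1‖ ^ 2) * e := by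
        gcongr
        exact le_mul_of_one_le_left (sq_nonneg _) hκ
    _ = _ := by ring

theorem norm_sq_schrodingerSolDeriv_le (w : ℂ) :
    ‖schrodingerSolDeriv q x₀ (0, 1) (w ^ 2) x‖ ^ 2 ≤
      Real.exp (energyRate q w * |x - x₀|) := by
  have henergy := (isSchrodingerSolOn_schrodingerSol q x₀ (0, 1) (w ^ 2) (uIcc x₀ x)).energy_le
    (by positivity : 0 < ‖w‖ + 1)
  simp only [schrodingerSol_self, schrodingerSolDeriv_self, norm_one, norm_zero, one_pow, ne_eq,
    OfNat.ofNat_ne_zero, not_false_eq_true, zero_pow, mul_zero, add_zero, one_mul] at henergy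
  exact (le_add_of_nonneg_right (by positivity)).trans henergy

theorem energy_rate_le (w : ℂ) :
    energyRate q w ≤ ‖q‖ + 1 + 2 * ‖w‖ := by
  rw [energyRate, div_le_iff₀ (by positivity)]
  have : ‖w ^ 2 + ((‖w‖ + 1 : ℝ) : ℂ) ^ 2‖ ≤ ‖w‖ ^ 2 + (‖w‖ + 1) ^ 2 :=
    (norm_add_le _ _).trans_eq (by rw [norm_pow, norm_pow, Complex.norm_real,
      Real.norm_of_nonneg (by positivity)])
  nlinarith [norm_nonneg q, norm_nonneg w, mul_nonneg (norm_nonneg q) (norm_nonneg w)]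

theorem energy_rate_neg_le (k : ℝ) :
    energyRate q (k * Complex.I) ≤ ‖q‖ + 2 := by
  have hk : ‖k * Complex.I‖ = |k| := by simp
  have hrate : (k * Complex.I) ^ 2 + ((|k| + 1 : ℝ) : ℂ) ^ 2 = ((2 * |k| + 1 : ℝ) : ℂ) := by
    rw [mul_pow, Complex.I_sq]
    norm_cast
    rw [← sq_abs k]
    push_cast
    ring
  rw [energyRate, hk, hrate, Complex.norm_real, Real.norm_of_nonneg (by positivity),
    div_le_iff₀ (by positivity)]
  nlinarith [mul_nonneg (norm_nonneg q) (abs_nonneg k)]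

theorem IsHalfOrderEntire.of_norm_sq_le {f : ℂ → ℂ} (hf : Differentiable ℂ f) {B : ℝ}
    (h : ∀ w : ℂ, ‖f (w ^ 2)‖ ^ 2 ≤ B *
      Real.exp (energyRate q w * |x - x₀|)) :
    IsHalfOrderEntire f where
  differentiable := hf
  growth := by
    refine ⟨1 + |B| * Real.exp ((‖q‖ + 1) * |x - x₀|), 2 * |x - x₀|, fun w => ?_⟩
    have hw : ‖f (w ^ 2)‖ ^ 2 ≤
        |B| * Real.exp ((‖q‖ + 1) * |x - x₀|) * Real.exp (2 * |x - x₀| * ‖w‖) := calc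
      _ ≤ |B| * Real.exp ((‖q‖ + 1 + 2 * ‖w‖) * |x - x₀|) := by
        refine (h w).trans ?_
        gcongr
        exacts [le_abs_self B, energy_rate_le q w]
      _ = _ := by rw [mul_assoc, ← Real.exp_add]; ring_nf
    have : 1 ≤ Real.exp (2 * |x - x₀| * ‖w‖) := Real.one_le_exp (by positivity)
    nlinarith [sq_nonneg (‖f (w ^ 2)‖ - 1), sq_nonneg ‖f (w ^ 2)‖]
  bounded_neg := by
    refine ⟨1 + |B| * Real.exp ((‖q‖ + 2) * |x - x₀|), fun k => ?_⟩
    have hk : ‖f (-(k : ℂ) ^ 2)‖ ^ 2 ≤ |B| * Real.exp ((‖q‖ + 2) * |x - x₀|) := by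
      rw [show -(k : ℂ) ^ 2 = (k * Complex.I) ^ 2 by rw [mul_pow, Complex.I_sq, mul_neg_one]]
      refine (h _).trans ?_
      gcongr
      exacts [le_abs_self B, energy_rate_neg_le q k]
    nlinarith [sq_nonneg (‖f (-(k : ℂ) ^ 2)‖ - 1)]

theorem isHalfOrderEntire_schrodingerSol (v : ℂ × ℂ) :
    IsHalfOrderEntire fun s => schrodingerSol q x₀ v s x :=
  .of_norm_sq_le q x₀ x (differentiable_schrodingerSol q x₀ v x)
    (norm_sq_schrodingerSol_le q x₀ x v)

theorem isHalfOrderEntire_schrodingerSolDeriv :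
    IsHalfOrderEntire fun s => schrodingerSolDeriv q x₀ (0, 1) s x :=
  .of_norm_sq_le q x₀ x (differentiable_schrodingerSolDeriv q x₀ (0, 1) x) (B := 1)
    (by simpa using norm_sq_schrodingerSolDeriv_le q x₀ x)

end PhragmenLindelof

section Asymptotics

variable {q : ℝ →ᵇ ℝ} {k x₀ x : ℝ}

theorem mul_norm_schrodingerSol_le (hk : 0 < k) (hqk : ‖q‖ ≤ k) (hx : |x - x₀| ≤ 1) :
    k * ‖schrodingerSol q x₀ (0, 1) (k ^ 2) x‖ ≤ 2 * Real.exp (k * |x - x₀|) := by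
  have henergy :=
    (isSchrodingerSolOn_schrodingerSol q x₀ (0, 1) (k ^ 2) (uIcc x₀ x)).energy_le hk
  have hk2 : ‖(k ^ 2 + k ^ 2 : ℂ)‖ = 2 * k ^ 2 := by
    rw [← two_mul, norm_mul, norm_pow, Complex.norm_real, Real.norm_of_nonneg hk.le,
      Complex.norm_ofNat]
  simp only [schrodingerSol_self, schrodingerSolDeriv_self, norm_one, norm_zero, one_pow, ne_eq,
    OfNat.ofNat_ne_zero, not_false_eq_true, zero_pow, mul_zero, add_zero, one_mul, hk2] at henergy
  refine le_of_sq_le_sq ?_ (by positivity)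
  have hrate : (‖q‖ + 2 * k ^ 2) / k * |x - x₀| ≤ 1 + (2 : ℕ) * (k * |x - x₀|) := by
    have : (‖q‖ + 2 * k ^ 2) / k ≤ 1 + 2 * k := by
      rw [div_le_iff₀ hk]
      nlinarith
    push_cast
    nlinarith [abs_nonneg (x - x₀)]
  calc (k * ‖schrodingerSol q x₀ (0, 1) (k ^ 2) x‖) ^ 2
      ≤ Real.exp (1 + (2 : ℕ) * (k * |x - x₀|)) := by
        rw [mul_pow]
        exact (le_add_of_nonneg_left (sq_nonneg _)).trans
          (henergy.trans (Real.exp_le_exp.2 hrate))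
    _ = Real.exp 1 * Real.exp (k * |x - x₀|) ^ 2 := by rw [Real.exp_add, Real.exp_nat_mul]
    _ ≤ 4 * Real.exp (k * |x - x₀|) ^ 2 := by
        gcongr
        linarith [Real.exp_one_lt_d9]
    _ = _ := by ring

theorem mul_norm_schrodingerSol_zero_le (hk : 0 < k) (hqk : ‖q‖ ≤ k) (hx : x ∈ Icc (0 : ℝ) 1) :
    k * ‖schrodingerSol q 0 (0, 1) (k ^ 2) x‖ ≤ 2 * Real.exp (k * x) := by
  have habs : |x - 0| = x := by rw [sub_zero, abs_of_nonneg hx.1]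
  simpa only [habs] using mul_norm_schrodingerSol_le (x₀ := 0) hk hqk (habs.trans_le hx.2)

/-- Up to the factor `e^{∓kt}`, `y' ± k y` has derivative `q y` when `y'' = (q + k²) y`. -/
theorem IsSchrodingerSolOn.hasDerivAt_exp_mul {q : ℝ → ℝ} {S : Set ℝ} {y z : ℝ → ℂ} {t : ℝ}
    (κ : ℝ) (h : IsSchrodingerSolOn q ((κ : ℂ) ^ 2) S y z) (ht : t ∈ S) :
    HasDerivAt (fun t : ℝ => Complex.exp (-κ * t) * (z t + κ * y t))
      (Complex.exp (-κ * t) * (q t * y t)) t := by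
  have hexp : HasDerivAt (fun t : ℝ => Complex.exp (-κ * t)) (Complex.exp (-κ * t) * -κ) t := by
    simpa using ((hasDerivAt_id (t : ℂ)).const_mul (-κ : ℂ)).cexp.comp_ofReal
  refine (hexp.mul ((h.2 t ht).add ((h.1 t ht).const_mul (κ : ℂ)))).congr_deriv ?_
  simp only [Pi.add_apply]
  ring

theorem norm_exp_mul_sub_one_le (hk : 0 < k) (hqk : ‖q‖ ≤ k) (hx : x ∈ Icc (0 : ℝ) 1) {κ : ℝ}
    (hκ : κ ^ 2 = k ^ 2) :
    ‖Complex.exp (-κ * x) * (schrodingerSolDeriv q 0 (0, 1) (k ^ 2) x +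
      κ * schrodingerSol q 0 (0, 1) (k ^ 2) x) - 1‖ ≤
      2 * ‖q‖ / k * Real.exp ((k - κ) * x) := by
  have hκk : κ ≤ k := (abs_le_of_sq_le_sq' hκ.le hk.le).2
  have hbound : ∀ t ∈ Icc 0 x, ‖Complex.exp (-κ * t) *
      (q t * schrodingerSol q 0 (0, 1) (k ^ 2) t)‖ ≤ 2 * ‖q‖ / k * Real.exp ((k - κ) * x) := by
    intro t ht
    have hy := mul_norm_schrodingerSol_zero_le hk hqk ⟨ht.1, ht.2.trans hx.2⟩
    have hq : ‖(q t : ℂ)‖ ≤ ‖q‖ := by simpa using q.norm_coe_le_norm t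
    have hexp : ‖Complex.exp (-κ * t)‖ = Real.exp (-κ * t) := by
      rw [Complex.norm_exp]
      norm_cast
    calc _ ≤ Real.exp (-κ * t) * (‖q‖ * (2 * Real.exp (k * t) / k)) := by
          rw [norm_mul, norm_mul, hexp]
          gcongr
          rwa [le_div_iff₀' hk]
      _ = 2 * ‖q‖ / k * Real.exp ((k - κ) * t) := by
          rw [show (k - κ) * t = -κ * t + k * t by ring, Real.exp_add]
          ring
      _ ≤ _ := by
          gcongr
          exact ht.2
  have hsol := isSchrodingerSolOn_schrodingerSol q 0 (0, 1) (k ^ 2) univ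
  rw [show (k : ℂ) ^ 2 = κ ^ 2 by exact_mod_cast hκ.symm] at hsol hbound ⊢
  have := (convex_Icc 0 x).norm_image_sub_le_of_norm_hasDerivWithin_le
    (fun t _ => (hsol.hasDerivAt_exp_mul κ (mem_univ t)).hasDerivWithinAt) hbound
    (left_mem_Icc.2 hx.1) (right_mem_Icc.2 hx.1)
  simp only [Complex.ofReal_zero, mul_zero, Complex.exp_zero, schrodingerSol_self,
    schrodingerSolDeriv_self, one_mul, add_zero, sub_zero, Real.norm_of_nonneg hx.1] at this
  exact this.trans (mul_le_of_le_one_right (by positivity) hx.2)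

/-- Recovers `y` from the quantities `y' ± k y`, which are close to `e^{±kx}`; here `E = e^{kx}`. -/
theorem le_mul_norm_of_norm_sub_one_le {E : ℝ} {y z : ℂ} (hk : 0 < k) (hE : 4 ≤ E)
    (hplus : ‖(E : ℂ)⁻¹ * (z + k * y) - 1‖ ≤ 1 / 4)
    (hminus : ‖E * (z - k * y) - 1‖ ≤ 1 / 4 * (E * E)) : E ≤ 8 * k * ‖y‖ := by
  have hE₀ : 0 < E := by linarith
  set P := (E : ℂ)⁻¹ * (z + k * y) - 1
  set N := E * (z - k * y) - 1
  have hsolve : (E : ℂ) = 2 * k * y - E * P + (E : ℂ)⁻¹ * (1 + N) := by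
    have : (E : ℂ) ≠ 0 := by exact_mod_cast hE₀.ne'
    simp only [P, N]
    field_simp
    ring
  have hnorm : E ≤ 2 * k * ‖y‖ + E * ‖P‖ + E⁻¹ * (1 + ‖N‖) := calc
    E = ‖(E : ℂ)‖ := by rw [Complex.norm_real, Real.norm_of_nonneg hE₀.le]
    _ = ‖2 * k * y - E * P + (E : ℂ)⁻¹ * (1 + N)‖ := congrArg norm hsolve
    _ ≤ ‖2 * k * y‖ + ‖E * P‖ + ‖(E : ℂ)⁻¹ * (1 + N)‖ :=
      (norm_add_le _ _).trans (add_le_add_left (norm_sub_le _ _) _)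
    _ ≤ _ := by
      rw [norm_mul, norm_mul, norm_mul, norm_mul, norm_inv, Complex.norm_real, Complex.norm_real,
        Real.norm_of_nonneg hk.le, Real.norm_of_nonneg hE₀.le, Complex.norm_ofNat]
      gcongr
      exact (norm_add_le _ _).trans_eq (by rw [norm_one])
  have hP : E * ‖P‖ ≤ E * (1 / 4) := by gcongr
  have hN : E⁻¹ * (1 + ‖N‖) ≤ 1 / 4 + E * (1 / 4) := calc
    _ ≤ E⁻¹ * (1 + 1 / 4 * (E * E)) := by gcongr
    _ = E⁻¹ + E * (1 / 4) := by field_simp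
    _ ≤ _ := by
      gcongr
      simpa using inv_anti₀ four_pos hE
  linarith

theorem exp_le_mul_norm_schrodingerSol (hk : 8 * ‖q‖ + 8 ≤ k) (hx : x ∈ Icc (1 / 2 : ℝ) 1) :
    Real.exp (k * x) ≤ 8 * k * ‖schrodingerSol q 0 (0, 1) (k ^ 2) x‖ := by
  have hk₀ : 0 < k := by linarith [norm_nonneg q]
  have hqk : ‖q‖ ≤ k := by linarith [norm_nonneg q]
  have hx' : x ∈ Icc (0 : ℝ) 1 := ⟨by linarith [hx.1], hx.2⟩
  have hplus := norm_exp_mul_sub_one_le hk₀ hqk hx' (κ := k) rfl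
  have hminus := norm_exp_mul_sub_one_le hk₀ hqk hx' (κ := -k) (neg_sq k)
  have hcexp : Complex.exp (k * x) = Real.exp (k * x) := by
    rw [← Complex.ofReal_mul, ← Complex.ofReal_exp]
  rw [sub_self, zero_mul, Real.exp_zero, mul_one, neg_mul, Complex.exp_neg, hcexp] at hplus
  rw [sub_neg_eq_add, Complex.ofReal_neg, neg_neg, hcexp, neg_mul, ← sub_eq_add_neg,
    show (k + k) * x = k * x + k * x by ring, Real.exp_add] at hminus
  have hsmall : 2 * ‖q‖ / k ≤ 1 / 4 := by
    rw [div_le_iff₀ hk₀]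
    linarith
  have hE : 4 ≤ Real.exp (k * x) := by
    have := Real.add_one_le_exp (k * x)
    nlinarith [hx.1, norm_nonneg q]
  exact le_mul_norm_of_norm_sub_one_le hk₀ hE (hplus.trans hsmall)
    (hminus.trans (by gcongr))

end Asymptotics

section HochstadtLieberman

variable {q₁ q₂ : ℝ →ᵇ ℝ}

/-- The solution of `y'' = (q + s) y` with `y 0 = 0` and `y' 0 = 1`; the zeros of
`s ↦ leftSol q s 1` are the negatives of the Dirichlet eigenvalues of `-d²/dx² + q` on `[0, 1]`. -/
noncomputable abbrev leftSol (q : ℝ →ᵇ ℝ) (s : ℂ) (x : ℝ) : ℂ :=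
  schrodingerSol q 0 (0, 1) s x

/-- The derivative in `x` of `leftSol q s`. -/
noncomputable abbrev leftSolDeriv (q : ℝ →ᵇ ℝ) (s : ℂ) (x : ℝ) : ℂ :=
  schrodingerSolDeriv q 0 (0, 1) s x

theorem norm_wronskian_leftSol_le (hq : EqOn q₁ q₂ (Icc (1 / 2) 1)) {k : ℝ}
    (hk : 0 < k) (hk₁ : ‖q₁‖ ≤ k) (hk₂ : ‖q₂‖ ≤ k) :
    ‖leftSol q₁ (k ^ 2) 1 * leftSolDeriv q₂ (k ^ 2) 1 -
      leftSolDeriv q₁ (k ^ 2) 1 * leftSol q₂ (k ^ 2) 1‖ ≤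
      4 * ‖q₂ - q₁‖ / k ^ 2 * Real.exp k := by
  have h₁ := isSchrodingerSolOn_schrodingerSol q₁ 0 (0, 1) (k ^ 2)
  have h₂ := isSchrodingerSolOn_schrodingerSol q₂ 0 (0, 1) (k ^ 2)
  have hbound : ∀ x ∈ Icc (0 : ℝ) 1, ‖(q₂ x - q₁ x : ℂ) *
      (leftSol q₁ (k ^ 2) x * leftSol q₂ (k ^ 2) x)‖ ≤ 4 * ‖q₂ - q₁‖ / k ^ 2 * Real.exp k := by
    intro x hx
    rcases le_or_gt (1 / 2) x with hx2 | hx2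
    · rw [hq ⟨hx2, hx.2⟩, sub_self, zero_mul, norm_zero]
      positivity
    have hy : ∀ {q : ℝ →ᵇ ℝ}, ‖q‖ ≤ k → ‖leftSol q (k ^ 2) x‖ ≤ 2 * Real.exp (k / 2) / k :=
      fun hqk => by
        rw [le_div_iff₀' hk]
        refine (mul_norm_schrodingerSol_zero_le hk hqk hx).trans ?_
        gcongr
        nlinarith
    have hdiff : ‖(q₂ x - q₁ x : ℂ)‖ ≤ ‖q₂ - q₁‖ := by
      rw [← Complex.ofReal_sub, Complex.norm_real]
      exact (q₂ - q₁).norm_coe_le_norm x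
    calc _ ≤ ‖q₂ - q₁‖ * (2 * Real.exp (k / 2) / k * (2 * Real.exp (k / 2) / k)) :=
          norm_mul_le_of_le hdiff (norm_mul_le_of_le (hy hk₁) (hy hk₂))
      _ = 4 * ‖q₂ - q₁‖ / k ^ 2 * (Real.exp (k / 2) * Real.exp (k / 2)) := by ring
      _ = _ := by rw [← Real.exp_add, add_halves]
  simpa using (convex_Icc (0 : ℝ) 1).norm_image_sub_le_of_norm_hasDerivWithin_le
    (fun x hx => ((h₁ _).hasDerivAt_wronskian (h₂ _) hx).hasDerivWithinAt) hbound
    (left_mem_Icc.2 zero_le_one) (right_mem_Icc.2 zero_le_one)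

theorem le_div_of_mul_le_of_le_mul {E G a c k : ℝ} (hE : 0 < E) (hG : 0 ≤ G) (hk : 0 < k)
    (hlower : E ≤ 8 * k * a) (hupper : a * G ≤ c / k ^ 2 * E) : G ≤ 8 * c / k := by
  rw [le_div_iff₀ hk]
  refine le_of_mul_le_mul_left ?_ hE
  calc E * (G * k) ≤ 8 * k * a * (G * k) := by gcongr
    _ = 8 * k ^ 2 * (a * G) := by ring
    _ ≤ 8 * k ^ 2 * (c / k ^ 2 * E) := by gcongr
    _ = E * (8 * c) := by field_simp

theorem leftSolDeriv_one_eq (hq : EqOn q₁ q₂ (Icc (1 / 2) 1))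
    (hD : ∀ s, leftSol q₁ s 1 = leftSol q₂ s 1) (s : ℂ) :
    leftSolDeriv q₁ s 1 = leftSolDeriv q₂ s 1 := by
  refine (sub_eq_zero.1 (((isHalfOrderEntire_schrodingerSolDeriv q₂ 0 1).sub
    (isHalfOrderEntire_schrodingerSolDeriv q₁ 0 1)).eq_zero_of_norm_le
    (C := 8 * (4 * ‖q₂ - q₁‖)) (k₀ := 8 * ‖q₁‖ + 8 + ‖q₂‖) (fun k hk => ?_) s)).symm
  have hk₀ : 0 < k := by linarith [norm_nonneg q₁, norm_nonneg q₂]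
  have hW := norm_wronskian_leftSol_le hq hk₀ (by linarith [norm_nonneg q₁, norm_nonneg q₂])
    (by linarith [norm_nonneg q₁])
  have hlower := exp_le_mul_norm_schrodingerSol (q := q₁) (k := k) (x := 1)
    (by linarith [norm_nonneg q₂]) (by norm_num)
  rw [← hD, mul_comm (leftSolDeriv q₁ _ _), ← mul_sub, norm_mul] at hW
  rw [mul_one] at hlower
  exact le_div_of_mul_le_of_le_mul (Real.exp_pos k) (norm_nonneg _) hk₀ hlower hW

theorem leftSol_half_eq (hq : EqOn q₁ q₂ (Icc (1 / 2) 1))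
    (hD : ∀ s, leftSol q₁ s 1 = leftSol q₂ s 1) (s : ℂ) :
    leftSol q₁ s (1 / 2) = leftSol q₂ s (1 / 2) ∧
      leftSolDeriv q₁ s (1 / 2) = leftSolDeriv q₂ s (1 / 2) := by
  have huIcc : uIcc (1 : ℝ) (1 / 2) = Icc (1 / 2) 1 := uIcc_of_ge (by norm_num)
  refine (isSchrodingerSolOn_schrodingerSol q₁ 0 (0, 1) s _).eq_of_eq
    ((isSchrodingerSolOn_schrodingerSol q₂ 0 (0, 1) s _).congr ?_) (hD s)
    (leftSolDeriv_one_eq hq hD s)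
  exact huIcc ▸ hq.symm

theorem leftSol_eq_add (q : ℝ →ᵇ ℝ) (s : ℂ) (x₀ x : ℝ) :
    leftSol q s x = leftSol q s x₀ * schrodingerSol q x₀ (1, 0) s x +
      leftSolDeriv q s x₀ * schrodingerSol q x₀ (0, 1) s x := by
  refine ((isSchrodingerSolOn_schrodingerSol q 0 (0, 1) s (uIcc x₀ x)).eq_of_eq
    ((isSchrodingerSolOn_schrodingerSol q x₀ (1, 0) s _).linearCombination
      (isSchrodingerSolOn_schrodingerSol q x₀ (0, 1) s _) (leftSol q s x₀)
      (leftSolDeriv q s x₀)) ?_ ?_).1 <;> simp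

/-- `χ₁ ψ₂ - ψ₁ χ₂` at `x`, where `χⱼ`, `ψⱼ` is the fundamental system of `y'' = (qⱼ + s) y`
normalised at `1/2`. -/
noncomputable def midpointCross (q₁ q₂ : ℝ →ᵇ ℝ) (s : ℂ) (x : ℝ) : ℂ :=
  schrodingerSol q₁ (1 / 2) (1, 0) s x * schrodingerSol q₂ (1 / 2) (0, 1) s x -
    schrodingerSol q₁ (1 / 2) (0, 1) s x * schrodingerSol q₂ (1 / 2) (1, 0) s x

theorem isHalfOrderEntire_midpointCross (q₁ q₂ : ℝ →ᵇ ℝ) (x : ℝ) :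
    IsHalfOrderEntire fun s => midpointCross q₁ q₂ s x :=
  have hsol := fun q v => isHalfOrderEntire_schrodingerSol q (1 / 2) x v
  ((hsol q₁ (1, 0)).mul (hsol q₂ (0, 1))).sub ((hsol q₁ (0, 1)).mul (hsol q₂ (1, 0)))

theorem leftSol_half_mul_midpointCross {s : ℂ} (x : ℝ)
    (hy : leftSol q₁ s (1 / 2) = leftSol q₂ s (1 / 2))
    (hz : leftSolDeriv q₁ s (1 / 2) = leftSolDeriv q₂ s (1 / 2)) :
    leftSol q₁ s (1 / 2) * midpointCross q₁ q₂ s x =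
      leftSol q₁ s x * schrodingerSol q₂ (1 / 2) (0, 1) s x -
        schrodingerSol q₁ (1 / 2) (0, 1) s x * leftSol q₂ s x := by
  rw [leftSol_eq_add q₁ s (1 / 2) x, leftSol_eq_add q₂ s (1 / 2) x, ← hy, ← hz, midpointCross]
  ring

/-- The growth rates `x` and `1/2 - x` of the two factors of each product in
`leftSol_half_mul_midpointCross` add up to the rate `1/2` of `leftSol q₁ (k ^ 2) (1 / 2)`. -/
theorem norm_leftSol_half_mul_midpointCross_le {k x : ℝ} (hk : 0 < k) (hk₁ : ‖q₁‖ ≤ k)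
    (hk₂ : ‖q₂‖ ≤ k) (hx : x ∈ Icc (0 : ℝ) (1 / 2))
    (hy : leftSol q₁ (k ^ 2) (1 / 2) = leftSol q₂ (k ^ 2) (1 / 2))
    (hz : leftSolDeriv q₁ (k ^ 2) (1 / 2) = leftSolDeriv q₂ (k ^ 2) (1 / 2)) :
    ‖leftSol q₁ (k ^ 2) (1 / 2)‖ * ‖midpointCross q₁ q₂ (k ^ 2) x‖ ≤
      8 / k ^ 2 * Real.exp (k * (1 / 2)) := by
  have hleft : ∀ {q : ℝ →ᵇ ℝ}, ‖q‖ ≤ k → ‖leftSol q (k ^ 2) x‖ ≤ 2 * Real.exp (k * x) / k :=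
    fun hqk => (le_div_iff₀' hk).2
      (mul_norm_schrodingerSol_zero_le hk hqk ⟨hx.1, by linarith [hx.2]⟩)
  have habs : |x - 1 / 2| = 1 / 2 - x := by rw [abs_sub_comm, abs_of_nonneg (sub_nonneg.2 hx.2)]
  have hmid : ∀ {q : ℝ →ᵇ ℝ}, ‖q‖ ≤ k → ‖schrodingerSol q (1 / 2) (0, 1) (k ^ 2) x‖ ≤
      2 * Real.exp (k * (1 / 2 - x)) / k := fun hqk => by
    have := mul_norm_schrodingerSol_le (x₀ := 1 / 2) (x := x) hk hqk
      (by rw [habs]; linarith [hx.1])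
    rwa [habs, ← le_div_iff₀' hk] at this
  rw [← norm_mul, leftSol_half_mul_midpointCross x hy hz]
  calc _ ≤ 2 * Real.exp (k * x) / k * (2 * Real.exp (k * (1 / 2 - x)) / k) +
        2 * Real.exp (k * (1 / 2 - x)) / k * (2 * Real.exp (k * x) / k) :=
        norm_sub_le_of_le (norm_mul_le_of_le (hleft hk₁) (hmid hk₂))
          (norm_mul_le_of_le (hmid hk₁) (hleft hk₂))
    _ = 8 / k ^ 2 * (Real.exp (k * x) * Real.exp (k * (1 / 2 - x))) := by ring
    _ = _ := by rw [← Real.exp_add]; ring_nf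

theorem midpointCross_eq_zero (hq : EqOn q₁ q₂ (Icc (1 / 2) 1))
    (hD : ∀ s, leftSol q₁ s 1 = leftSol q₂ s 1) {x : ℝ} (hx : x ∈ Icc (0 : ℝ) (1 / 2)) (s : ℂ) :
    midpointCross q₁ q₂ s x = 0 := by
  refine (isHalfOrderEntire_midpointCross q₁ q₂ x).eq_zero_of_norm_le (C := 8 * 8)
    (k₀ := 8 * ‖q₁‖ + 8 + ‖q₂‖) (fun k hk => ?_) s
  have hk₀ : 0 < k := by linarith [norm_nonneg q₁, norm_nonneg q₂]
  obtain ⟨hy, hz⟩ := leftSol_half_eq hq hD (k ^ 2)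
  exact le_div_of_mul_le_of_le_mul (Real.exp_pos _) (norm_nonneg _) hk₀
    (exp_le_mul_norm_schrodingerSol (by linarith [norm_nonneg q₂]) (by norm_num))
    (norm_leftSol_half_mul_midpointCross_le hk₀ (by linarith [norm_nonneg q₁, norm_nonneg q₂])
      (by linarith [norm_nonneg q₁]) hx hy hz)

section Squares

variable {p₁ p₂ : ℝ → ℝ} {s : ℂ} {S : Set ℝ} {x : ℝ}

/-- The idea is that `(ψ / χ)' = W / χ²` for the Wronskian `W` of `χ` and `ψ`; the computation
below avoids dividing by `χ`. -/
theorem IsSchrodingerSolOn.sq_eq_sq (hS : IsOpen S) {χ₁ χ₁' ψ₁ ψ₁' χ₂ χ₂' ψ₂ ψ₂' : ℝ → ℂ} {W : ℂ}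
    (hχ₁ : IsSchrodingerSolOn p₁ s S χ₁ χ₁') (hψ₁ : IsSchrodingerSolOn p₁ s S ψ₁ ψ₁')
    (hχ₂ : IsSchrodingerSolOn p₂ s S χ₂ χ₂') (hψ₂ : IsSchrodingerSolOn p₂ s S ψ₂ ψ₂')
    (hcross : ∀ t ∈ S, χ₁ t * ψ₂ t = ψ₁ t * χ₂ t) (hx : x ∈ S) (hW : W ≠ 0)
    (hW₁ : χ₁ x * ψ₁' x - χ₁' x * ψ₁ x = W) (hW₂ : χ₂ x * ψ₂' x - χ₂' x * ψ₂ x = W) :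
    χ₁ x ^ 2 = χ₂ x ^ 2 := by
  have hcross_deriv : χ₁' x * ψ₂ x + χ₁ x * ψ₂' x = ψ₁' x * χ₂ x + ψ₁ x * χ₂' x :=
    ((hχ₁.1 x hx).mul (hψ₂.1 x hx)).unique
      (((hψ₁.1 x hx).mul (hχ₂.1 x hx)).congr_of_eventuallyEq
        (Filter.eventuallyEq_of_mem (hS.mem_nhds hx) hcross))
  refine mul_left_cancel₀ hW ?_
  linear_combination χ₁ x * χ₂ x * hcross_deriv - χ₁ x ^ 2 * hW₂ + χ₂ x ^ 2 * hW₁ -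
    (χ₁' x * χ₂ x + χ₁ x * χ₂' x) * hcross x hx

theorem IsSchrodingerSolOn.potential_eq_of_sq_eqOn (hS : IsOpen S) {y₁ z₁ y₂ z₂ : ℝ → ℂ}
    (h₁ : IsSchrodingerSolOn p₁ s S y₁ z₁) (h₂ : IsSchrodingerSolOn p₂ s S y₂ z₂)
    (hsq : EqOn (fun t => y₁ t ^ 2) (fun t => y₂ t ^ 2) S) (hx : x ∈ S) (hy : y₁ x ≠ 0) :
    p₁ x = p₂ x := by
  have hfirst : EqOn (fun t => y₁ t * z₁ t) (fun t => y₂ t * z₂ t) S := fun t ht => by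
    have := ((h₁.1 t ht).pow 2).unique (((h₂.1 t ht).pow 2).congr_of_eventuallyEq
      (Filter.eventuallyEq_of_mem (hS.mem_nhds ht) hsq))
    linear_combination this / 2
  have hsecond : z₁ x * z₁ x + y₁ x * ((p₁ x + s) * y₁ x) =
      z₂ x * z₂ x + y₂ x * ((p₂ x + s) * y₂ x) :=
    ((h₁.1 x hx).mul (h₁.2 x hx)).unique (((h₂.1 x hx).mul (h₂.2 x hx)).congr_of_eventuallyEq
      (Filter.eventuallyEq_of_mem (hS.mem_nhds hx) hfirst))
  have hsq_x : y₁ x ^ 2 = y₂ x ^ 2 := hsq hx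
  have hfirst_x : y₁ x * z₁ x = y₂ x * z₂ x := hfirst hx
  have hy2 : y₁ x ^ 2 ≠ 0 := pow_ne_zero 2 hy
  have hz : z₁ x ^ 2 = z₂ x ^ 2 := mul_left_cancel₀ hy2 <| by
    linear_combination (y₁ x * z₁ x + y₂ x * z₂ x) * hfirst_x - z₂ x ^ 2 * hsq_x
  have : (p₁ x : ℂ) = p₂ x := mul_left_cancel₀ hy2 <| by
    linear_combination hsecond - hz - (p₂ x + s) * hsq_x
  exact_mod_cast this

end Squares

theorem wronskian_fundamentalSystem (q : ℝ →ᵇ ℝ) (x₀ : ℝ) (s : ℂ) (x : ℝ) :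
    schrodingerSol q x₀ (1, 0) s x * schrodingerSolDeriv q x₀ (0, 1) s x -
      schrodingerSolDeriv q x₀ (1, 0) s x * schrodingerSol q x₀ (0, 1) s x = 1 := by
  simpa using (isSchrodingerSolOn_schrodingerSol q x₀ (1, 0) s (uIcc x₀ x)).wronskian_eq
    (isSchrodingerSolOn_schrodingerSol q x₀ (0, 1) s _)

/-- The Hochstadt–Lieberman theorem, with the Dirichlet spectrum entering through the
characteristic function `s ↦ leftSol q s 1`. -/
theorem eqOn_of_leftSol_one_eq (hq : EqOn q₁ q₂ (Icc (1 / 2) 1))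
    (hD : ∀ s, leftSol q₁ s 1 = leftSol q₂ s 1) : EqOn q₁ q₂ (Icc 0 1) := by
  have hsol := fun q v => isSchrodingerSolOn_schrodingerSol q (1 / 2) v 0 (Ioo 0 (1 / 2))
  have hcross : ∀ t ∈ Ioo (0 : ℝ) (1 / 2), _ := fun t ht =>
    sub_eq_zero.1 (midpointCross_eq_zero hq hD (Ioo_subset_Icc_self ht) 0)
  have hinterior : EqOn q₁ q₂ (Ioo 0 (1 / 2)) := fun x hx => by
    have hW := fun q => wronskian_fundamentalSystem q (1 / 2) 0
    have hχ_sq : EqOn (fun t => schrodingerSol q₁ (1 / 2) (1, 0) 0 t ^ 2)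
        (fun t => schrodingerSol q₂ (1 / 2) (1, 0) 0 t ^ 2) (Ioo 0 (1 / 2)) := fun t ht =>
      (hsol q₁ (1, 0)).sq_eq_sq isOpen_Ioo (hsol q₁ (0, 1)) (hsol q₂ (1, 0)) (hsol q₂ (0, 1))
        hcross ht one_ne_zero (hW q₁ t) (hW q₂ t)
    have hψ_sq : EqOn (fun t => schrodingerSol q₁ (1 / 2) (0, 1) 0 t ^ 2)
        (fun t => schrodingerSol q₂ (1 / 2) (0, 1) 0 t ^ 2) (Ioo 0 (1 / 2)) := fun t ht =>
      (hsol q₁ (0, 1)).sq_eq_sq isOpen_Ioo (hsol q₁ (1, 0)) (hsol q₂ (0, 1)) (hsol q₂ (1, 0))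
        (fun t ht => (hcross t ht).symm) ht (neg_ne_zero.2 one_ne_zero)
        (by linear_combination -hW q₁ t) (by linear_combination -hW q₂ t)
    by_cases hχ : schrodingerSol q₁ (1 / 2) (1, 0) 0 x = 0
    · have hψ : schrodingerSol q₁ (1 / 2) (0, 1) 0 x ≠ 0 := fun hψ => by
        have := hW q₁ x
        rw [hχ, hψ, zero_mul, mul_zero, sub_zero] at this
        exact zero_ne_one this
      exact (hsol q₁ (0, 1)).potential_eq_of_sq_eqOn isOpen_Ioo (hsol q₂ (0, 1)) hψ_sq hx hψ
    · exact (hsol q₁ (1, 0)).potential_eq_of_sq_eqOn isOpen_Ioo (hsol q₂ (1, 0)) hχ_sq hx hχ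
  have hclosed : EqOn q₁ q₂ (Icc 0 (1 / 2)) := by
    simpa [closure_Ioo] using hinterior.closure q₁.continuous q₂.continuous
  intro x hx
  rcases le_total x (1 / 2) with h | h
  exacts [hclosed ⟨hx.1, h⟩, hq ⟨h, hx.2⟩]

end HochstadtLieberman

section Viscosity

theorem tendsto_of_isMaxOn_of_tendstoUniformlyOn {X ι : Type*} [TopologicalSpace X] {K : Set X}
    {F : ι → X → ℝ} {f : X → ℝ} {l : Filter ι} {p : ι → X} {x₀ : X} (hK : IsCompact K)
    (hf : ContinuousOn f K) (hF : TendstoUniformlyOn F f l K) (hpK : ∀ᶠ n in l, p n ∈ K)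
    (hp : ∀ᶠ n in l, IsMaxOn (F n) K (p n)) (hx₀ : x₀ ∈ K)
    (hstrict : ∀ y ∈ K, f x₀ ≤ f y → y = x₀) : Tendsto p l (𝓝 x₀) := by
  refine hK.tendsto_nhds_of_unique_mapClusterPt hpK fun y hy hcluster => ?_
  refine hstrict y hy (le_of_forall_pos_sub_le fun ε hε => ?_)
  have hnear : ∀ᶠ z in 𝓝[K] y, f z < f y + ε / 3 := (hf y hy).eventually_lt_const (by linarith)
  rw [eventually_nhdsWithin_iff] at hnear
  obtain ⟨n, hnear, hpK, hmax, hF⟩ := ((hcluster.frequently hnear).and_eventually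
    (hpK.and (hp.and (Metric.tendstoUniformlyOn_iff.1 hF (ε / 3) (by linarith))))).exists
  have hp := (abs_sub_lt_iff.1 (hF (p n) hpK)).2
  have hx := (abs_sub_lt_iff.1 (hF x₀ hx₀)).1
  linarith [hnear hpK, isMaxOn_iff.1 hmax x₀ hx₀]

theorem exists_seq_isLocalMax_tendsto {X : Type*} [TopologicalSpace X] [LocallyCompactSpace X]
    {F : ℕ → X → ℝ} {f : X → ℝ} {x₀ : X} (hFc : ∀ n, Continuous (F n))
    (hF : TendstoLocallyUniformly F f atTop) (hstrict : ∀ᶠ y in 𝓝 x₀, f x₀ ≤ f y → y = x₀) :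
    ∃ p : ℕ → X, Tendsto p atTop (𝓝 x₀) ∧ ∀ᶠ n in atTop, IsLocalMax (F n) (p n) := by
  obtain ⟨K, hK, hKsub, hKc⟩ := local_compact_nhds hstrict
  choose p hpK hp using fun n => hKc.exists_isMaxOn ⟨_, mem_of_mem_nhds hK⟩ (hFc n).continuousOn
  have hpx : Tendsto p atTop (𝓝 x₀) := tendsto_of_isMaxOn_of_tendstoUniformlyOn hKc
    (hF.continuous (.of_forall hFc)).continuousOn
    (tendstoLocallyUniformlyOn_iff_tendstoUniformlyOn_of_compact hKc |>.1
      hF.tendstoLocallyUniformlyOn) (.of_forall hpK) (.of_forall hp) (mem_of_mem_nhds hK) hKsub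
  exact ⟨p, hpx, (hpx.eventually (eventually_mem_nhds_iff.2 hK)).mono fun n => (hp n).isLocalMax⟩

theorem second_deriv_nonpos_of_isLocalMax {f f' : ℝ → ℝ} {x₀ f'' : ℝ}
    (hf : ∀ᶠ x in 𝓝 x₀, HasDerivAt f (f' x) x) (hf' : HasDerivAt f' f'' x₀)
    (hmax : IsLocalMax f x₀) : f'' ≤ 0 := by
  by_contra! hpos
  have hderiv : deriv f =ᶠ[𝓝 x₀] f' := hf.mono fun x hx => hx.deriv
  have hderiv₂ : deriv (deriv f) x₀ = f'' := by rw [hderiv.deriv_eq, hf'.deriv]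
  have hmin : IsLocalMin f x₀ := isLocalMin_of_deriv_deriv_pos (hderiv₂ ▸ hpos)
    hmax.deriv_eq_zero hf.self_of_nhds.continuousAt
  have hconst : f =ᶠ[𝓝 x₀] fun _ => f x₀ := by
    filter_upwards [hmax, hmin] with x using le_antisymm
  simp [← hderiv₂, hconst.deriv.deriv_eq] at hpos

/-- `u` is a pointwise solution of `u_t = u_xx - q u` on `(0, 1) × (0, ∞)`, with no joint
regularity assumed of the partial derivatives `ux`, `uxx`, `ut`. -/
structure IsInteriorHeatSol (q : ℝ → ℝ) (u ux uxx ut : ℝ → ℝ → ℝ) : Prop where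
  hasDerivAt_x : ∀ x ∈ Ioo (0 : ℝ) 1, ∀ t > 0, HasDerivAt (fun y => u y t) (ux x t) x
  hasDerivAt_xx : ∀ x ∈ Ioo (0 : ℝ) 1, ∀ t > 0, HasDerivAt (fun y => ux y t) (uxx x t) x
  hasDerivAt_t : ∀ x ∈ Ioo (0 : ℝ) 1, ∀ t > 0, HasDerivAt (fun τ => u x τ) (ut x t) t
  pde : ∀ x ∈ Ioo (0 : ℝ) 1, ∀ t > 0, ut x t = uxx x t - q x * u x t

/-- Viscosity subsolutions of `v_t = v_xx - q v` on `(0, 1) × (0, ∞)`. Only test functions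
of the separated form `ψ x + κ t` are used. -/
def IsHeatSubsolution (q : ℝ → ℝ) (v : ℝ → ℝ → ℝ) : Prop :=
  ∀ ⦃x₀ t₀ : ℝ⦄, x₀ ∈ Ioo 0 1 → 0 < t₀ → ∀ ⦃ψ ψ' ψ'' κ κ' : ℝ → ℝ⦄,
    (∀ x, HasDerivAt ψ (ψ' x) x) → (∀ x, HasDerivAt ψ' (ψ'' x) x) → Continuous ψ'' →
    (∀ t, HasDerivAt κ (κ' t) t) → Continuous κ' →
    IsLocalMax (fun p : ℝ × ℝ => v p.1 p.2 - (ψ p.1 + κ p.2)) (x₀, t₀) →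
    κ' t₀ ≤ ψ'' x₀ - q x₀ * v x₀ t₀

variable {q : ℝ → ℝ} {u ux uxx ut v v' : ℝ → ℝ → ℝ}

theorem IsInteriorHeatSol.sum_translates (h : IsInteriorHeatSol q u ux uxx ut) (c : ℝ)
    {ι : Type*} (s : Finset ι) {τ : ι → ℝ} (hτ : ∀ i, 0 ≤ τ i) :
    IsInteriorHeatSol q (fun x t => c * ∑ i ∈ s, u x (t + τ i))
      (fun x t => c * ∑ i ∈ s, ux x (t + τ i)) (fun x t => c * ∑ i ∈ s, uxx x (t + τ i))
      (fun x t => c * ∑ i ∈ s, ut x (t + τ i)) where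
  hasDerivAt_x x hx t ht := (HasDerivAt.fun_sum fun i _ =>
    h.hasDerivAt_x x hx _ (add_pos_of_pos_of_nonneg ht (hτ i))).const_mul c
  hasDerivAt_xx x hx t ht := (HasDerivAt.fun_sum fun i _ =>
    h.hasDerivAt_xx x hx _ (add_pos_of_pos_of_nonneg ht (hτ i))).const_mul c
  hasDerivAt_t x hx t ht := (HasDerivAt.fun_sum fun i _ =>
    (h.hasDerivAt_t x hx _ (add_pos_of_pos_of_nonneg ht (hτ i))).comp_add_const t _).const_mul c
  pde x hx t ht := by
    rw [Finset.sum_congr rfl fun i _ => h.pde x hx _ (add_pos_of_pos_of_nonneg ht (hτ i)),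
      Finset.sum_sub_distrib, ← Finset.mul_sum]
    ring

theorem IsInteriorHeatSol.isHeatSubsolution (h : IsInteriorHeatSol q u ux uxx ut) :
    IsHeatSubsolution q u := by
  intro x₀ t₀ hx₀ ht₀ ψ ψ' ψ'' κ κ' hψ hψ' _ hκ _ hmax
  have htime : IsLocalMax (fun t => u x₀ t - (ψ x₀ + κ t)) t₀ :=
    hmax.comp_continuous (g := fun t => (x₀, t)) (by fun_prop)
  have hspace : IsLocalMax (fun x => u x t₀ - (ψ x + κ t₀)) x₀ :=
    hmax.comp_continuous (g := fun x => (x, t₀)) (by fun_prop)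
  have first_order : ut x₀ t₀ - κ' t₀ = 0 := htime.hasDerivAt_eq_zero
    ((h.hasDerivAt_t x₀ hx₀ t₀ ht₀).sub ((hκ t₀).const_add _))
  have second_order : uxx x₀ t₀ - ψ'' x₀ ≤ 0 := by
    refine second_deriv_nonpos_of_isLocalMax ?_ ((h.hasDerivAt_xx x₀ hx₀ t₀ ht₀).sub (hψ' x₀))
      hspace
    filter_upwards [Ioo_mem_nhds hx₀.1 hx₀.2] with x hx
    exact (h.hasDerivAt_x x hx t₀ ht₀).sub ((hψ x).add_const _)
  linarith [h.pde x₀ hx₀ t₀ ht₀]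

theorem hasDerivAt_sub_pow (c x : ℝ) (n : ℕ) :
    HasDerivAt (fun y => (y - c) ^ n) (n * (x - c) ^ (n - 1)) x := by
  simpa using ((hasDerivAt_id x).sub_const c).fun_pow n

theorem eventually_eq_of_isLocalMax_of_le_sub_pow {F : ℝ × ℝ → ℝ} {p₀ : ℝ × ℝ}
    (hmax : IsLocalMax F p₀) :
    ∀ᶠ p in 𝓝 p₀, F p₀ ≤ F p - ((p.1 - p₀.1) ^ 4 + (p.2 - p₀.2) ^ 2) → p = p₀ := by
  filter_upwards [hmax] with p hp hle
  have hx : (p.1 - p₀.1) ^ 4 = 0 := by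
    refine le_antisymm ?_ (by positivity)
    linarith [sq_nonneg (p.2 - p₀.2)]
  have ht : (p.2 - p₀.2) ^ 2 = 0 := le_antisymm (by linarith) (by positivity)
  exact Prod.ext (sub_eq_zero.1 (pow_eq_zero_iff (by norm_num) |>.1 hx))
    (sub_eq_zero.1 (pow_eq_zero_iff (by norm_num) |>.1 ht))

theorem IsHeatSubsolution.of_tendstoLocallyUniformly {w : ℕ → ℝ → ℝ → ℝ} (hq : Continuous q)
    (hw : ∀ n, IsHeatSubsolution q (w n)) (hwc : ∀ n, Continuous (Function.uncurry (w n)))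
    (hlim : TendstoLocallyUniformly (fun n => Function.uncurry (w n)) (Function.uncurry v) atTop) :
    IsHeatSubsolution q v := by
  intro x₀ t₀ hx₀ ht₀ ψ ψ' ψ'' κ κ' hψ hψ' hψc hκ hκc hmax
  have hvc : Continuous (Function.uncurry v) := hlim.continuous (.of_forall hwc)
  -- The quartic and quadratic terms make the maximum strict without changing the test derivatives.
  set test : ℝ × ℝ → ℝ := fun p => ψ p.1 + (p.1 - x₀) ^ 4 + (κ p.2 + (p.2 - t₀) ^ 2)
  have htest : Continuous test := by
    have hψ₀ : Continuous ψ := continuous_iff_continuousAt.2 fun x => (hψ x).continuousAt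
    have hκ₀ : Continuous κ := continuous_iff_continuousAt.2 fun t => (hκ t).continuousAt
    fun_prop
  have hstrict : ∀ᶠ p in 𝓝 (x₀, t₀), Function.uncurry v (x₀, t₀) - test (x₀, t₀) ≤
      Function.uncurry v p - test p → p = (x₀, t₀) := by
    filter_upwards [eventually_eq_of_isLocalMax_of_le_sub_pow hmax] with p hp hle
    simp only [test, sub_self, Function.uncurry_def] at hle
    exact hp (by linarith)
  have hunif : TendstoLocallyUniformly (fun n => Function.uncurry (w n) - test)
      (Function.uncurry v - test) atTop := hlim.sub
    (Metric.tendstoLocallyUniformly_iff.2 fun ε hε x =>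
      ⟨univ, univ_mem, .of_forall fun _ y _ => by simpa using hε⟩)
  obtain ⟨p, hpx, hp⟩ := exists_seq_isLocalMax_tendsto (fun n => (hwc n).sub htest) hunif hstrict
  have hineq : ∀ᶠ n in atTop, κ' (p n).2 + 2 * ((p n).2 - t₀) ≤
      ψ'' (p n).1 + 12 * ((p n).1 - x₀) ^ 2 - q (p n).1 * Function.uncurry (w n) (p n) := by
    filter_upwards [hp, hpx (prod_mem_nhds (Ioo_mem_nhds hx₀.1 hx₀.2) (Ioi_mem_nhds ht₀))]
      with n hn hmem
    exact hw n hmem.1 hmem.2 (ψ'' := fun x => ψ'' x + 12 * (x - x₀) ^ 2)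
      (κ' := fun t => κ' t + 2 * (t - t₀)) (fun x => (hψ x).add (hasDerivAt_sub_pow x₀ x 4))
      (fun x => (hψ' x).add (((hasDerivAt_sub_pow x₀ x 3).const_mul 4).congr_deriv (by ring)))
      (by fun_prop) (fun t => (hκ t).add
        ((hasDerivAt_sub_pow t₀ t 2).congr_deriv (by ring))) (by fun_prop) hn
  have hleft : Continuous fun y : ℝ × ℝ => κ' y.2 + 2 * (y.2 - t₀) := by fun_prop
  have hright : Continuous fun y : ℝ × ℝ => ψ'' y.1 + 12 * (y.1 - x₀) ^ 2 := by fun_prop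
  have hq' : Continuous fun y : ℝ × ℝ => q y.1 := by fun_prop
  have := le_of_tendsto_of_tendsto ((hleft.tendsto (x₀, t₀)).comp hpx)
    (((hright.tendsto (x₀, t₀)).comp hpx).sub
      (((hq'.tendsto (x₀, t₀)).comp hpx).mul (hlim.tendsto_comp hvc.continuousAt hpx))) hineq
  simpa using this

end Viscosity

section RiemannSum

variable {E : Type*} [NormedAddCommGroup E] [NormedSpace ℝ E] [CompleteSpace E]

theorem norm_riemannSum_sub_integral_le {g : ℝ → E} {h ε : ℝ} {n : ℕ} (hg : Continuous g)
    (hn : 0 < n) (hh : 0 ≤ h)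
    (hosc : ∀ s ∈ Icc 0 h, ∀ s' ∈ Icc 0 h, dist s s' ≤ h / n → ‖g s - g s'‖ ≤ ε) :
    ‖(h / n) • ∑ i ∈ Finset.range n, g (i * (h / n)) - ∫ s in 0..h, g s‖ ≤ h * ε := by
  set δ := h / n with hδ
  have hδ₀ : 0 ≤ δ := by positivity
  have hnδ : n * δ = h := by rw [hδ]; field_simp
  have hsplit : ∑ i ∈ Finset.range n, ∫ s in i * δ..(i + 1 : ℕ) * δ, g s = ∫ s in 0..h, g s := by
    rw [intervalIntegral.sum_integral_adjacent_intervals (a := fun i : ℕ => (i : ℝ) * δ)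
      fun k _ => hg.intervalIntegrable _ _]
    simp [hnδ]
  have hcell : ∀ i ∈ Finset.range n,
      ‖δ • g (i * δ) - ∫ s in i * δ..(i + 1 : ℕ) * δ, g s‖ ≤ ε * δ := by
    intro i hi
    have hlen : (i + 1 : ℕ) * δ - i * δ = δ := by push_cast; ring
    have hlast : (i + 1 : ℕ) * δ ≤ h := by
      rw [← hnδ]
      gcongr
      exact Finset.mem_range.1 hi
    have hle : i * δ ≤ (i + 1 : ℕ) * δ := by linarith
    have hfirst : 0 ≤ i * δ := by positivity
    have hconst : δ • g (i * δ) = ∫ _ in i * δ..(i + 1 : ℕ) * δ, g (i * δ) := by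
      rw [intervalIntegral.integral_const, hlen]
    rw [hconst, ← intervalIntegral.integral_sub (by simp) (hg.intervalIntegrable _ _)]
    refine (intervalIntegral.norm_integral_le_of_norm_le_const fun s hs => ?_).trans_eq
      (by rw [hlen, abs_of_nonneg hδ₀])
    rw [uIoc_of_le hle] at hs
    refine hosc _ ⟨hfirst, by linarith⟩ _ ⟨by linarith [hs.1], by linarith [hs.2]⟩ ?_
    rw [dist_comm, Real.dist_eq, abs_of_nonneg] <;> linarith [hs.1, hs.2]
  rw [← hsplit, Finset.smul_sum, ← Finset.sum_sub_distrib]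
  refine (norm_sum_le_of_le _ hcell).trans_eq ?_
  rw [Finset.sum_const, Finset.card_range, nsmul_eq_mul, ← hnδ]
  ring

theorem tendstoLocallyUniformly_riemannSum {X : Type*} [PseudoMetricSpace X]
    [LocallyCompactSpace X] {F : X → ℝ → E} (hF : Continuous (Function.uncurry F)) {h : ℝ}
    (hh : 0 < h) :
    TendstoLocallyUniformly
      (fun (n : ℕ) x => (h / n) • ∑ i ∈ Finset.range n, F x (i * (h / n)))
      (fun x => ∫ s in 0..h, F x s) atTop := by
  refine tendstoLocallyUniformly_iff_forall_isCompact.2 fun K hK =>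
    Metric.tendstoUniformlyOn_iff.2 fun ε hε => ?_
  obtain ⟨δ, hδ, hFδ⟩ := Metric.uniformContinuousOn_iff.1
    ((hK.prod (isCompact_Icc (a := 0) (b := h))).uniformContinuousOn_of_continuous hF.continuousOn)
    (ε / (2 * h)) (by positivity)
  filter_upwards [eventually_gt_atTop 0,
    (tendsto_const_div_atTop_nhds_zero_nat h).eventually_lt_const hδ] with n hn hnδ x hx
  rw [dist_comm, dist_eq_norm]
  refine (norm_riemannSum_sub_integral_le (by fun_prop) hn hh.le
    fun s hs s' hs' hss' => ?_).trans_lt (show h * (ε / (2 * h)) < ε by field_simp; norm_num)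
  rw [← dist_eq_norm]
  refine (hFδ (x, s) ⟨hx, hs⟩ (x, s') ⟨hx, hs'⟩ ?_).le
  rw [Prod.dist_eq, dist_self, max_eq_right dist_nonneg]
  exact hss'.trans_lt hnδ

end RiemannSum

section Window

variable {q : ℝ → ℝ} {u ux uxx ut v v' : ℝ → ℝ → ℝ}

theorem exists_touching_parabola_of_chord_lt {r : ℝ → ℝ} (hr : ContinuousOn r (Icc 0 1)) {x : ℝ}
    (hx : x ∈ Icc (0 : ℝ) 1) (hlt : (1 - x) * r 0 + x * r 1 < r x) :
    ∃ x₀ ∈ Ioo (0 : ℝ) 1, ∃ m, ∃ η > 0,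
      ∀ y ∈ Icc (0 : ℝ) 1, r y ≤ r x₀ + m * (y - x₀) - η * (y - x₀) ^ 2 := by
  set η := r x - ((1 - x) * r 0 + x * r 1)
  have hη : 0 < η := sub_pos.2 hlt
  let k : ℝ → ℝ := fun y => r y - ((1 - y) * r 0 + y * r 1) - η * (y * (1 - y))
  have hk : ContinuousOn k (Icc 0 1) := by fun_prop
  obtain ⟨x₀, hx₀, hmax⟩ := isCompact_Icc.exists_isMaxOn ⟨x, hx⟩ hk
  have hpos : 0 < k x₀ := by
    have : 0 < η * (1 - x * (1 - x)) := mul_pos hη (by nlinarith [sq_nonneg (x - 1 / 2)])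
    have : k x = η * (1 - x * (1 - x)) := by simp only [k, η]; ring
    linarith [isMaxOn_iff.1 hmax x hx]
  have hne₀ : x₀ ≠ 0 := by rintro rfl; simp [k] at hpos
  have hne₁ : x₀ ≠ 1 := by rintro rfl; simp [k] at hpos
  refine ⟨x₀, ⟨hx₀.1.lt_of_ne' hne₀, hx₀.2.lt_of_ne hne₁⟩, r 1 - r 0 + η * (1 - 2 * x₀), η, hη,
    fun y hy => ?_⟩
  have := isMaxOn_iff.1 hmax y hy
  simp only [k] at this
  linarith

theorem hasDerivAt_integral_zero {g : ℝ → ℝ} (hg : Continuous g) (x : ℝ) :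
    HasDerivAt (fun y => ∫ z in 0..y, g z) (g x) x :=
  intervalIntegral.integral_hasDerivAt_right (hg.intervalIntegrable _ _)
    (hg.stronglyMeasurableAtFilter _ _) hg.continuousAt

theorem eventually_sub_le_add_sq (hvt : ∀ x t, HasDerivAt (v x) (v' x t) t) {L x₀ t₁ η : ℝ}
    (hx₀ : x₀ ∈ Icc (0 : ℝ) 1) (hL : ∀ᶠ t in 𝓝 t₁, ∀ x ∈ Icc (0 : ℝ) 1, ∀ y ∈ Icc (0 : ℝ) 1,
      |v' x t - v' y t| ≤ L * |x - y|) (hη : 0 < η) :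
    ∀ᶠ t in 𝓝 t₁, ∀ x ∈ Icc (0 : ℝ) 1, v x t - v x₀ t ≤
      v x t₁ - v x₀ t₁ + η / 2 * (x - x₀) ^ 2 + L ^ 2 / (2 * η) * (t - t₁) ^ 2 := by
  obtain ⟨δ, hδ, hLδ⟩ := Metric.eventually_nhds_iff_ball.1 hL
  filter_upwards [Metric.ball_mem_nhds t₁ hδ] with t ht x hx
  have hincr : |(v x t - v x₀ t) - (v x t₁ - v x₀ t₁)| ≤ L * |x - x₀| * |t - t₁| :=
    (convex_ball t₁ δ).norm_image_sub_le_of_norm_hasDerivWithin_le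
      (fun t _ => ((hvt x t).sub (hvt x₀ t)).hasDerivWithinAt)
      (fun t ht => hLδ t ht x hx x₀ hx₀) (Metric.mem_ball_self hδ) ht
  have amgm : L * |x - x₀| * |t - t₁| ≤
      η / 2 * (x - x₀) ^ 2 + L ^ 2 / (2 * η) * (t - t₁) ^ 2 := by
    have hsq : 0 ≤ (η * |x - x₀| - L * |t - t₁|) ^ 2 / (2 * η) := by positivity
    have hexp : (η * |x - x₀| - L * |t - t₁|) ^ 2 / (2 * η) = η / 2 * |x - x₀| ^ 2 +
        L ^ 2 / (2 * η) * |t - t₁| ^ 2 - L * |x - x₀| * |t - t₁| := by field_simp; ring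
    rw [sq_abs, sq_abs] at hexp
    linarith
  linarith [(abs_le.1 hincr).2]

/-- If `r` exceeded its chord, a concave parabola would touch it from above, and adding the double
primitive to the parabola would give a test function that violates the subsolution property. -/
theorem IsHeatSubsolution.le_chord (hv : IsHeatSubsolution q v) (hq : Continuous q)
    (hvc : Continuous (Function.uncurry v)) (hvt : ∀ x t, HasDerivAt (v x) (v' x t) t)
    (hv' : Continuous (Function.uncurry v')) {L t₁ : ℝ} (ht₁ : 0 < t₁)
    (hL : ∀ᶠ t in 𝓝 t₁, ∀ x ∈ Icc (0 : ℝ) 1, ∀ y ∈ Icc (0 : ℝ) 1,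
      |v' x t - v' y t| ≤ L * |x - y|)
    {r : ℝ → ℝ}
    (hr : ∀ x, r x = v x t₁ - ∫ y in 0..x, ∫ z in 0..y, (v' z t₁ + q z * v z t₁))
    {x : ℝ} (hx : x ∈ Icc (0 : ℝ) 1) : r x ≤ (1 - x) * r 0 + x * r 1 := by
  by_contra! hlt
  set g : ℝ → ℝ := fun z => v' z t₁ + q z * v z t₁ with hg_def
  have hg : Continuous g := by fun_prop
  set G : ℝ → ℝ := fun x => ∫ y in 0..x, ∫ z in 0..y, g z
  have hG' (x : ℝ) : HasDerivAt (fun y => ∫ z in 0..y, g z) (g x) x := hasDerivAt_integral_zero hg x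
  have hG (x : ℝ) : HasDerivAt G (∫ z in 0..x, g z) x := hasDerivAt_integral_zero
    (continuous_iff_continuousAt.2 fun y => (hG' y).continuousAt) x
  have hrc : Continuous r := funext hr ▸ Continuous.sub (by fun_prop)
    (continuous_iff_continuousAt.2 fun x => (hG x).continuousAt)
  obtain ⟨x₀, hx₀, m, η, hη, htouch⟩ := exists_touching_parabola_of_chord_lt hrc.continuousOn hx hlt
  have hx₀' := Ioo_subset_Icc_self hx₀
  have hmax : IsLocalMax (fun p : ℝ × ℝ => v p.1 p.2 -
      ((G p.1 + (m * (p.1 - x₀) - η / 2 * (p.1 - x₀) ^ 2)) +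
        (v x₀ p.2 + L ^ 2 / (2 * η) * (p.2 - t₁) ^ 2))) (x₀, t₁) := by
    filter_upwards [prod_mem_nhds (Icc_mem_nhds hx₀.1 hx₀.2)
      (eventually_sub_le_add_sq hvt hx₀' hL hη)] with p hp
    have hincr := hp.2 p.1 hp.1
    have := htouch p.1 hp.1
    rw [hr, hr] at this
    simp only [sub_self]
    linarith
  have hcontra := hv hx₀ ht₁ (ψ' := fun x => (∫ z in 0..x, g z) + (m - η * (x - x₀)))
    (ψ'' := fun x => g x + -η) (κ' := fun t => v' x₀ t + L ^ 2 / η * (t - t₁))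
    (fun x => (hG x).add ((((hasDerivAt_id x).sub_const x₀).const_mul m).sub
      ((hasDerivAt_sub_pow x₀ x 2).const_mul _) |>.congr_deriv (by ring)))
    (fun x => (hG' x).add ((((hasDerivAt_id x).sub_const x₀).const_mul η).const_sub m
      |>.congr_deriv (by ring))) (by fun_prop)
    (fun t => (hvt x₀ t).add (((hasDerivAt_sub_pow t₁ t 2).const_mul _).congr_deriv
      (by field_simp; ring))) (by fun_prop) hmax
  simp only [hg_def, sub_self, mul_zero, add_zero] at hcontra
  linarith

theorem IsInteriorHeatSol.isHeatSubsolution_window (h : IsInteriorHeatSol q u ux uxx ut)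
    (hq : Continuous q) (hu : Continuous (Function.uncurry u)) {δ : ℝ} (hδ : 0 < δ) :
    IsHeatSubsolution q (fun x t => ∫ s in 0..δ, u x (t + s)) := by
  refine IsHeatSubsolution.of_tendstoLocallyUniformly hq
    (fun n => (h.sum_translates (δ / n) (Finset.range n)
      (τ := fun i : ℕ => i * (δ / n)) fun i => by positivity).isHeatSubsolution) (fun n => ?_) ?_
  · unfold Function.uncurry
    fun_prop
  · exact tendstoLocallyUniformly_riemannSum (F := fun (p : ℝ × ℝ) s => u p.1 (p.2 + s))
      (by unfold Function.uncurry; fun_prop) hδ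

theorem hasDerivAt_window (hu : Continuous (Function.uncurry u)) (δ x t : ℝ) :
    HasDerivAt (fun t => ∫ s in 0..δ, u x (t + s)) (u x (t + δ) - u x t) t := by
  have hux : Continuous (u x) := by fun_prop
  have hsplit (t : ℝ) : ∫ s in 0..δ, u x (t + s) =
      (∫ s in 0..t + δ, u x s) - ∫ s in 0..t, u x s := by
    rw [intervalIntegral.integral_comp_add_left (u x), add_zero,
      intervalIntegral.integral_interval_sub_left (hux.intervalIntegrable _ _)
        (hux.intervalIntegrable _ _)]
  simp only [hsplit]
  exact ((hasDerivAt_integral_zero hux (t + δ)).comp_add_const t δ).sub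
    (hasDerivAt_integral_zero hux t)

/-- The failure of the time average `V x = ∫_t^{t+δ} u x` to equal the double primitive of
`u(·, t+δ) - u(·, t) + q V`, which is what integrating the heat equation in time makes of `V''`. -/
noncomputable def heatDefect (q : ℝ → ℝ) (u : ℝ → ℝ → ℝ) (δ t x : ℝ) : ℝ :=
  (∫ s in 0..δ, u x (t + s)) - ∫ y in 0..x, ∫ z in 0..y,
    (u z (t + δ) - u z t + q z * ∫ s in 0..δ, u z (t + s))

theorem IsInteriorHeatSol.neg (h : IsInteriorHeatSol q u ux uxx ut) :
    IsInteriorHeatSol q (fun x t => -u x t) (fun x t => -ux x t) (fun x t => -uxx x t)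
      (fun x t => -ut x t) where
  hasDerivAt_x x hx t ht := (h.hasDerivAt_x x hx t ht).neg
  hasDerivAt_xx x hx t ht := (h.hasDerivAt_xx x hx t ht).neg
  hasDerivAt_t x hx t ht := (h.hasDerivAt_t x hx t ht).neg
  pde x hx t ht := by rw [h.pde x hx t ht]; ring

theorem heatDefect_neg (q : ℝ → ℝ) (u : ℝ → ℝ → ℝ) (δ t x : ℝ) :
    heatDefect q (fun x t => -u x t) δ t x = -heatDefect q u δ t x := by
  have (z : ℝ) : -u z (t + δ) - -u z t + q z * -(∫ s in 0..δ, u z (t + s)) =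
    -(u z (t + δ) - u z t + q z * ∫ s in 0..δ, u z (t + s)) := by ring
  simp only [heatDefect, intervalIntegral.integral_neg, this]
  ring

theorem continuous_heatDefect (hq : Continuous q) (hu : Continuous (Function.uncurry u))
    (δ x : ℝ) : Continuous fun t => heatDefect q u δ t x := by
  unfold heatDefect
  fun_prop

theorem IsInteriorHeatSol.heatDefect_le_chord (h : IsInteriorHeatSol q u ux uxx ut)
    (hq : Continuous q) (hu : Continuous (Function.uncurry u)) {Λ : ℝ → ℝ} (hΛ : Continuous Λ)
    (hlip : ∀ t > 0, ∀ x ∈ Icc (0 : ℝ) 1, ∀ y ∈ Icc (0 : ℝ) 1, |u x t - u y t| ≤ Λ t * |x - y|)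
    {δ t x : ℝ} (hδ : 0 < δ) (ht : 0 < t) (hx : x ∈ Icc (0 : ℝ) 1) :
    heatDefect q u δ t x ≤ (1 - x) * heatDefect q u δ t 0 + x * heatDefect q u δ t 1 := by
  refine (h.isHeatSubsolution_window hq hu hδ).le_chord hq
    (v' := fun x t => u x (t + δ) - u x t) (L := Λ (t + δ) + Λ t + 1)
    (by unfold Function.uncurry; fun_prop) (hasDerivAt_window hu δ)
    (by unfold Function.uncurry; fun_prop) ht ?_ (fun _ => rfl) hx
  have hΛδ : Continuous fun τ => Λ (τ + δ) + Λ τ := by fun_prop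
  filter_upwards [(hΛδ.tendsto t).eventually_lt_const (lt_add_one _), Ioi_mem_nhds ht]
    with τ hτΛ hτ x hx y hy
  calc |u x (τ + δ) - u x τ - (u y (τ + δ) - u y τ)|
      = |(u x (τ + δ) - u y (τ + δ)) - (u x τ - u y τ)| := by ring_nf
    _ ≤ |u x (τ + δ) - u y (τ + δ)| + |u x τ - u y τ| := abs_sub _ _
    _ ≤ Λ (τ + δ) * |x - y| + Λ τ * |x - y| :=
      add_le_add (hlip _ (add_pos hτ hδ) x hx y hy) (hlip _ hτ x hx y hy)
    _ = (Λ (τ + δ) + Λ τ) * |x - y| := by ring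
    _ ≤ (Λ (t + δ) + Λ t + 1) * |x - y| := by gcongr

theorem IsInteriorHeatSol.heatDefect_eq_chord (h : IsInteriorHeatSol q u ux uxx ut)
    (hq : Continuous q) (hu : Continuous (Function.uncurry u)) {Λ : ℝ → ℝ} (hΛ : Continuous Λ)
    (hlip : ∀ t > 0, ∀ x ∈ Icc (0 : ℝ) 1, ∀ y ∈ Icc (0 : ℝ) 1, |u x t - u y t| ≤ Λ t * |x - y|)
    {δ t x : ℝ} (hδ : 0 < δ) (ht : 0 ≤ t) (hx : x ∈ Icc (0 : ℝ) 1) :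
    heatDefect q u δ t x = (1 - x) * heatDefect q u δ t 0 + x * heatDefect q u δ t 1 := by
  have hpos : EqOn (fun t => heatDefect q u δ t x)
      (fun t => (1 - x) * heatDefect q u δ t 0 + x * heatDefect q u δ t 1) (Ioi 0) := by
    intro t ht
    refine le_antisymm (h.heatDefect_le_chord hq hu hΛ hlip hδ ht hx) ?_
    have := h.neg.heatDefect_le_chord hq (by unfold Function.uncurry; fun_prop) hΛ
      (fun t ht x hx y hy => by
        rw [neg_sub_neg, abs_sub_comm]
        exact hlip t ht x hx y hy) hδ ht hx
    simp only [heatDefect_neg] at this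
    linarith
  refine hpos.closure (continuous_heatDefect hq hu δ x) ?_ (closure_Ioi (0 : ℝ) ▸ ht)
  exact ((continuous_heatDefect hq hu δ 0).const_mul _).add
    ((continuous_heatDefect hq hu δ 1).const_mul _)

end Window

section Laplace

/-- The Laplace transform `∫₀^∞ e^{-st} g(t) dt`, with the junk value `0` of the Bochner integral
where the integrand is not integrable. -/
noncomputable def laplaceTransform (g : ℝ → ℂ) (s : ℂ) : ℂ :=
  ∫ t in Ioi (0 : ℝ), Complex.exp (-s * t) * g t

variable {g y : ℝ → ℂ} {C c σ : ℝ} {s : ℂ}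

theorem norm_cexp_neg_mul_le (t : ℝ) {z : ℂ} (hz : ‖z‖ ≤ C * Real.exp (c * t)) :
    ‖Complex.exp (-s * t) * z‖ ≤ C * Real.exp ((c - s.re) * t) := by
  have hexp : ‖Complex.exp (-s * t)‖ = Real.exp (-s.re * t) := by simp [Complex.norm_exp]
  rw [norm_mul, hexp]
  calc Real.exp (-s.re * t) * ‖z‖ ≤ Real.exp (-s.re * t) * (C * Real.exp (c * t)) := by gcongr
    _ = C * (Real.exp (-s.re * t) * Real.exp (c * t)) := by ring
    _ = C * Real.exp ((c - s.re) * t) := by rw [← Real.exp_add]; ring_nf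

theorem integrableOn_const_mul_exp (C : ℝ) (hs : c < s.re) :
    IntegrableOn (fun t => C * Real.exp ((c - s.re) * t)) (Ioi 0) :=
  (integrableOn_exp_mul_Ioi (sub_neg.2 hs) 0).const_mul C

theorem integrableOn_laplace (hg : ContinuousOn g (Ioi 0))
    (hbound : ∀ t > 0, ‖g t‖ ≤ C * Real.exp (c * t)) (hs : c < s.re) :
    IntegrableOn (fun t : ℝ => Complex.exp (-s * t) * g t) (Ioi 0) := by
  refine (integrableOn_const_mul_exp C hs).mono' ?_ ?_
  · have : Continuous fun t : ℝ => Complex.exp (-s * t) := by fun_prop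
    exact (this.continuousOn.mul hg).aestronglyMeasurable measurableSet_Ioi
  · filter_upwards [ae_restrict_mem measurableSet_Ioi] with t ht
    exact norm_cexp_neg_mul_le t (hbound t ht)

theorem laplaceTransform_eq_zero_of_hasDerivAt (hy : ContinuousWithinAt y (Ici 0) 0)
    (hy₀ : y 0 = 0) (hderiv : ∀ t > 0, HasDerivAt y (s * y t + g t) t)
    (hg : ContinuousOn g (Ioi 0)) {B b : ℝ} (hbound : ∀ t > 0, ‖g t‖ ≤ C * Real.exp (c * t))
    (hybound : ∀ t > 0, ‖y t‖ ≤ B * Real.exp (b * t)) (hc : c < s.re) (hb : b < s.re) :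
    laplaceTransform g s = 0 := by
  have hdecay : Tendsto (fun t : ℝ => Complex.exp (-s * t) * y t) atTop (𝓝 0) := by
    refine squeeze_zero_norm' ((eventually_gt_atTop 0).mono fun t ht =>
      norm_cexp_neg_mul_le t (hybound t ht)) ?_
    simpa using (Real.tendsto_exp_atBot.comp
      (tendsto_id.const_mul_atTop_of_neg (sub_neg.2 hb))).const_mul B
  have hexp (t : ℝ) : HasDerivAt (fun t : ℝ => Complex.exp (-s * t))
      (Complex.exp (-s * t) * -s) t := by
    simpa using ((hasDerivAt_id (t : ℂ)).const_mul (-s)).cexp.comp_ofReal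
  have := integral_Ioi_of_hasDerivAt_of_tendsto
    ((hexp 0).continuousAt.continuousWithinAt.mul hy)
    (fun t ht => ((hexp t).mul (hderiv t ht)).congr_deriv (by ring))
    (integrableOn_laplace hg hbound hc) hdecay
  simpa [hy₀, laplaceTransform] using this

theorem laplaceTransform_const_mul_sub {g₁ g₂ : ℝ → ℂ}
    (h₁ : IntegrableOn (fun t : ℝ => Complex.exp (-s * t) * g₁ t) (Ioi 0))
    (h₂ : IntegrableOn (fun t : ℝ => Complex.exp (-s * t) * g₂ t) (Ioi 0)) (k : ℂ) :
    laplaceTransform (fun t => k * g₁ t - g₂ t) s =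
      k * laplaceTransform g₁ s - laplaceTransform g₂ s := by
  simp only [laplaceTransform, ← integral_const_mul]
  rw [← integral_sub (h₁.const_mul k) h₂]
  congr! 2
  ring

/-- The points of the line `Re s = σ`; the `2π` matches Mathlib's normalisation of the Fourier
transform. -/
noncomputable def verticalLine (σ ξ : ℝ) : ℂ :=
  σ + 2 * Real.pi * ξ * Complex.I

@[simp]
theorem verticalLine_re (σ ξ : ℝ) : (verticalLine σ ξ).re = σ := by
  simp [verticalLine]

theorem continuous_verticalLine (σ : ℝ) : Continuous (verticalLine σ) := by
  unfold verticalLine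
  fun_prop

theorem verticalLine_injective (σ : ℝ) : Function.Injective (verticalLine σ) := fun ξ η h => by
  simpa [verticalLine, Real.pi_ne_zero] using congrArg Complex.im h

theorem fourier_indicator_eq_laplaceTransform (g : ℝ → ℂ) (σ ξ : ℝ) :
    𝓕 (indicator (Ioi 0) fun t : ℝ => Complex.exp (-σ * t) * g t) ξ =
      laplaceTransform g (verticalLine σ ξ) := by
  rw [Real.fourier_real_eq_integral_exp_smul, laplaceTransform,
    ← integral_indicator measurableSet_Ioi]
  refine integral_congr_ae (Eventually.of_forall fun t => ?_)
  by_cases ht : t ∈ Ioi 0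
  · simp only [indicator_of_mem ht, smul_eq_mul, ← mul_assoc, ← Complex.exp_add, verticalLine]
    push_cast
    ring_nf
  · simp [indicator_of_notMem ht]

theorem integrable_indicator_exp_mul (hg : ContinuousOn g (Ioi 0))
    (hbound : ∀ t > 0, ‖g t‖ ≤ C * Real.exp (c * t)) (hσ : c < σ) :
    Integrable (indicator (Ioi 0) fun t : ℝ => Complex.exp (-σ * t) * g t) :=
  (integrable_indicator_iff measurableSet_Ioi).2
    (integrableOn_laplace (s := σ) hg hbound (by simpa using hσ))

theorem continuous_laplaceTransform_verticalLine (hg : ContinuousOn g (Ioi 0))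
    (hbound : ∀ t > 0, ‖g t‖ ≤ C * Real.exp (c * t)) (hσ : c < σ) :
    Continuous fun ξ => laplaceTransform g (verticalLine σ ξ) := by
  simp only [← fourier_indicator_eq_laplaceTransform]
  exact VectorFourier.fourierIntegral_continuous Real.continuous_fourierChar
    (by fun_prop) (integrable_indicator_exp_mul hg hbound hσ)

theorem eq_zero_of_laplaceTransform_verticalLine_eq_zero (hg : ContinuousOn g (Ioi 0))
    (hbound : ∀ t > 0, ‖g t‖ ≤ C * Real.exp (c * t)) (hσ : c < σ)
    (hzero : ∀ ξ, laplaceTransform g (verticalLine σ ξ) = 0) {t : ℝ} (ht : 0 < t) : g t = 0 := by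
  set G := indicator (Ioi 0) fun t : ℝ => Complex.exp (-σ * t) * g t
  have hfourier : 𝓕 G = 0 := funext fun ξ =>
    (fourier_indicator_eq_laplaceTransform g σ ξ).trans (hzero ξ)
  have hcont : ContinuousAt G t := by
    have : ContinuousAt (fun t : ℝ => Complex.exp (-σ * t) * g t) t :=
      ContinuousAt.mul (by fun_prop) (hg.continuousAt (Ioi_mem_nhds ht))
    exact this.congr (eqOn_indicator.symm.eventuallyEq_of_mem (Ioi_mem_nhds ht))
  have hinv := (integrable_indicator_exp_mul hg hbound hσ).fourierInv_fourier_eq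
    (by rw [hfourier]; exact integrable_zero _ _ _) hcont
  rw [hfourier, Real.fourierInv_eq, indicator_of_mem (mem_Ioi.2 ht)] at hinv
  simpa using hinv

/-- A nonzero entire function has isolated zeros, so the transform vanishes on a punctured
neighbourhood of each point of a vertical line, hence on the line by continuity. -/
theorem eq_zero_of_mul_laplaceTransform_eq_zero {D : ℂ → ℂ} (hD : Differentiable ℂ D) {s₀ : ℂ}
    (hs₀ : D s₀ ≠ 0) (hg : ContinuousOn g (Ioi 0))
    (hbound : ∀ t > 0, ‖g t‖ ≤ C * Real.exp (c * t)) {b : ℝ}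
    (hzero : ∀ s : ℂ, b < s.re → D s * laplaceTransform g s = 0) {t : ℝ} (ht : 0 < t) :
    g t = 0 := by
  obtain ⟨σ, hσ⟩ := exists_gt (max b c)
  obtain ⟨hσb, hσ⟩ := max_lt_iff.1 hσ
  have hcont := continuous_laplaceTransform_verticalLine hg hbound hσ
  refine eq_zero_of_laplaceTransform_verticalLine_eq_zero hg hbound hσ (fun ξ => ?_) ht
  have hne : ∀ᶠ z in 𝓝[≠] verticalLine σ ξ, D z ≠ 0 :=
    (hD.analyticAt _).eventually_eq_zero_or_eventually_ne_zero.resolve_left fun h =>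
      hs₀ (congrFun ((AnalyticOnNhd.eq_of_eventuallyEq (fun z _ => hD.analyticAt z)
        (fun _ _ => analyticAt_const)) h) s₀)
  have hline : Tendsto (verticalLine σ) (𝓝[≠] ξ) (𝓝[≠] verticalLine σ ξ) :=
    ((continuous_verticalLine _).tendsto ξ).inf
      (tendsto_principal_principal.2 fun _ hη h => hη (verticalLine_injective _ h))
  refine tendsto_nhds_unique (l := 𝓝[≠] ξ) ((hcont.tendsto ξ).mono_left nhdsWithin_le_nhds)
    (tendsto_const_nhds.congr' ?_)
  filter_upwards [hline.eventually hne] with η hη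
  exact ((mul_eq_zero.1 (hzero _ (by simpa using hσb))).resolve_left hη).symm

end Laplace

section BoundaryData

/-- `u` solves `u_t = u_xx - q u` on `[0, 1]` with zero initial data, boundary values `0` and `a`,
and flux `f` at the left end, and is Lipschitz in `x` with a constant growing exponentially in `t`.
Continuity is asked on the whole plane, so that time averages need no boundary conventions. -/
structure IsHeatSolWithData (q : ℝ →ᵇ ℝ) (u : ℝ → ℝ → ℝ) (a f : ℝ → ℝ) (C c : ℝ) : Prop where
  continuous : Continuous (Function.uncurry u)
  interior : ∃ ux uxx ut, IsInteriorHeatSol q u ux uxx ut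
  lipschitz : ∀ t > 0, ∀ x ∈ Icc (0 : ℝ) 1, ∀ y ∈ Icc (0 : ℝ) 1,
    |u x t - u y t| ≤ C * Real.exp (c * t) * |x - y|
  initial : ∀ x, u x 0 = 0
  left : ∀ t, u 0 t = 0
  right : ∀ t > 0, u 1 t = a t
  flux : ∀ t > 0, Tendsto (fun x => u x t / x) (𝓝[>] 0) (𝓝 (f t))

/-- The primitive of `g` vanishing at `0`, as a complex-valued function. -/
noncomputable def complexPrimitive (g : ℝ → ℝ) (t : ℝ) : ℂ :=
  (∫ τ in 0..t, g τ : ℝ)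

theorem complexPrimitive_congr {g₁ g₂ : ℝ → ℝ} (h : ∀ t > 0, g₁ t = g₂ t) {t : ℝ} (ht : 0 ≤ t) :
    complexPrimitive g₁ t = complexPrimitive g₂ t := by
  unfold complexPrimitive
  congr 1
  refine intervalIntegral.integral_congr_ae (.of_forall fun τ hτ => h τ ?_)
  exact (uIoc_of_le ht ▸ hτ).1

theorem abs_integral_le_of_abs_le_exp {g : ℝ → ℝ} {C c : ℝ} (hc : 0 < c)
    (hg : ∀ t > 0, |g t| ≤ C * Real.exp (c * t)) {t : ℝ} (ht : 0 ≤ t) :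
    |∫ τ in 0..t, g τ| ≤ C / c * Real.exp (c * t) := by
  have hC : 0 ≤ C := nonneg_of_mul_nonneg_left ((abs_nonneg _).trans (hg 1 one_pos))
    (Real.exp_pos _)
  calc |∫ τ in 0..t, g τ| ≤ ∫ τ in 0..t, C * Real.exp (c * τ) := by
        rw [← Real.norm_eq_abs]
        exact intervalIntegral.norm_integral_le_of_norm_le ht
          (.of_forall fun τ hτ => hg τ hτ.1)
          ((by fun_prop : Continuous fun τ => C * Real.exp (c * τ)).intervalIntegrable 0 t)
    _ = C / c * (Real.exp (c * t) - 1) := by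
        rw [intervalIntegral.integral_const_mul, intervalIntegral.integral_comp_mul_left _ hc.ne']
        simp only [mul_zero, integral_exp, Real.exp_zero, smul_eq_mul]
        ring
    _ ≤ C / c * Real.exp (c * t) := by gcongr; linarith

theorem norm_complexPrimitive_le {g : ℝ → ℝ} {C c : ℝ} (hc : 0 < c)
    (hg : ∀ t > 0, |g t| ≤ C * Real.exp (c * t)) {t : ℝ} (ht : 0 ≤ t) :
    ‖complexPrimitive g t‖ ≤ C / c * Real.exp (c * t) := by
  simpa [complexPrimitive] using abs_integral_le_of_abs_le_exp hc hg ht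

theorem IsSchrodingerSolOn.integral_mul_eq {q : ℝ → ℝ} {s : ℂ} {a b : ℝ} {y z w w' w'' : ℝ → ℂ}
    (h : IsSchrodingerSolOn q s (uIcc a b) y z) (hq : ContinuousOn q (uIcc a b))
    (hw : ∀ x ∈ uIcc a b, HasDerivAt w (w' x) x) (hw' : ∀ x ∈ uIcc a b, HasDerivAt w' (w'' x) x)
    (hw'' : ContinuousOn w'' (uIcc a b)) :
    ∫ x in a..b, (w'' x - (q x + s) * w x) * y x =
      (w' b * y b - w b * z b) - (w' a * y a - w a * z a) := by
  have hwc : ContinuousOn w (uIcc a b) := fun x hx => (hw x hx).continuousAt.continuousWithinAt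
  have hyc : ContinuousOn y (uIcc a b) := fun x hx =>
    (h.hasDerivAt x hx).continuousAt.continuousWithinAt
  refine intervalIntegral.integral_eq_sub_of_hasDerivAt
    (f := fun x => w' x * y x - w x * z x) (fun x hx => ?_) ?_
  · exact (((hw' x hx).mul (h.hasDerivAt x hx)).sub
      ((hw x hx).mul (h.hasDerivAt_deriv x hx))).congr_deriv (by ring)
  · exact ContinuousOn.intervalIntegrable (by fun_prop)

theorem schrodingerSol_one_zero (q : ℝ →ᵇ ℝ) (s : ℂ) :
    schrodingerSol q 1 (0, 1) s 0 = -leftSol q s 1 := by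
  have := (isSchrodingerSolOn_schrodingerSol q 0 (0, 1) s (uIcc 0 1)).wronskian_eq
    (isSchrodingerSolOn_schrodingerSol q 1 (0, 1) s (uIcc 0 1))
  simp only [schrodingerSol_self, schrodingerSolDeriv_self] at this
  linear_combination this

namespace IsHeatSolWithData

variable {q : ℝ →ᵇ ℝ} {u : ℝ → ℝ → ℝ} {a f : ℝ → ℝ} {C c t x : ℝ} {s : ℂ}

theorem abs_le_mul (h : IsHeatSolWithData q u a f C c) (ht : 0 < t) (hx : x ∈ Icc (0 : ℝ) 1) :
    |u x t| ≤ C * Real.exp (c * t) * x := by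
  simpa [h.left, abs_of_nonneg hx.1] using
    h.lipschitz t ht x hx 0 (left_mem_Icc.2 zero_le_one)

theorem const_nonneg (h : IsHeatSolWithData q u a f C c) : 0 ≤ C := by
  have := (abs_nonneg _).trans (h.abs_le_mul one_pos (right_mem_Icc.2 zero_le_one))
  exact nonneg_of_mul_nonneg_left (by simpa using this) (Real.exp_pos _)

theorem abs_le (h : IsHeatSolWithData q u a f C c) (ht : 0 < t) (hx : x ∈ Icc (0 : ℝ) 1) :
    |u x t| ≤ C * Real.exp (c * t) :=
  (h.abs_le_mul ht hx).trans
    (mul_le_of_le_one_right (mul_nonneg h.const_nonneg (Real.exp_pos _).le) hx.2)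

theorem abs_flux_le (h : IsHeatSolWithData q u a f C c) (ht : 0 < t) :
    |f t| ≤ C * Real.exp (c * t) := by
  refine le_of_tendsto (h.flux t ht).abs ?_
  filter_upwards [Ioo_mem_nhdsGT (zero_lt_one' ℝ)] with x hx
  rw [abs_div, abs_of_pos hx.1, div_le_iff₀ hx.1]
  exact h.abs_le_mul ht (Ioo_subset_Icc_self hx)

theorem heatDefect_eq_mul (h : IsHeatSolWithData q u a f C c) (ht : 0 < t)
    (hx : x ∈ Icc (0 : ℝ) 1) : heatDefect q u t 0 x = x * heatDefect q u t 0 1 := by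
  obtain ⟨ux, uxx, ut, hint⟩ := h.interior
  rw [hint.heatDefect_eq_chord q.continuous h.continuous (Λ := fun t => C * Real.exp (c * t))
    (by fun_prop) h.lipschitz ht le_rfl hx]
  simp [show heatDefect q u t 0 0 = 0 by simp [heatDefect, h.left]]

theorem tendsto_integral_div (h : IsHeatSolWithData q u a f C c) (hc : 0 ≤ c) (ht : 0 ≤ t) :
    Tendsto (fun x => (∫ τ in 0..t, u x τ) / x) (𝓝[>] 0) (𝓝 (∫ τ in 0..t, f τ)) := by
  have hu := h.continuous
  simp only [← intervalIntegral.integral_div]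
  refine intervalIntegral.tendsto_integral_filter_of_dominated_convergence
    (fun _ => C * Real.exp (c * t)) (.of_forall fun x => ?_) ?_ intervalIntegrable_const
    (.of_forall fun τ hτ => ?_)
  · exact Continuous.aestronglyMeasurable (by fun_prop)
  · filter_upwards [Ioo_mem_nhdsGT (zero_lt_one' ℝ)] with x hx
    refine .of_forall fun τ hτ => ?_
    rw [uIoc_of_le ht] at hτ
    rw [Real.norm_eq_abs, abs_div, abs_of_pos hx.1, div_le_iff₀ hx.1]
    have hC := h.const_nonneg
    calc |u x τ| ≤ C * Real.exp (c * τ) * x := h.abs_le_mul hτ.1 (Ioo_subset_Icc_self hx)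
      _ ≤ C * Real.exp (c * t) * x := by
        gcongr
        exacts [hx.1.le, hτ.2]
  · exact h.flux τ (uIoc_of_le ht ▸ hτ).1

theorem heatDefect_one_eq_integral_flux (h : IsHeatSolWithData q u a f C c) (hc : 0 ≤ c)
    (ht : 0 < t) : heatDefect q u t 0 1 = ∫ τ in 0..t, f τ := by
  have hu := h.continuous
  have hq := q.continuous
  have hslope : Tendsto (fun x => (∫ y in 0..x, ∫ z in 0..y,
      (u z (0 + t) - u z 0 + q z * ∫ τ in 0..t, u z (0 + τ))) / x) (𝓝[>] 0) (𝓝 0) := by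
    have hd := hasDerivAt_integral_zero (g := fun y => ∫ z in 0..y,
      (u z (0 + t) - u z 0 + q z * ∫ τ in 0..t, u z (0 + τ))) (by fun_prop) 0
    simpa [div_eq_inv_mul] using hd.tendsto_slope_zero_right
  refine tendsto_nhds_unique (tendsto_const_nhds.congr' ?_)
    (((h.tendsto_integral_div hc ht.le).sub hslope).trans (by rw [sub_zero]))
  filter_upwards [Ioo_mem_nhdsGT (zero_lt_one' ℝ)] with x hx
  rw [← sub_div, eq_div_iff hx.1.ne', mul_comm, ← h.heatDefect_eq_mul ht (Ioo_subset_Icc_self hx)]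
  simp only [heatDefect, zero_add]

theorem integral_eq_doublePrimitive (h : IsHeatSolWithData q u a f C c) (hc : 0 ≤ c) (ht : 0 < t)
    (hx : x ∈ Icc (0 : ℝ) 1) : ∫ τ in 0..t, u x τ = x * (∫ τ in 0..t, f τ) +
      ∫ y in 0..x, ∫ z in 0..y, (u z t + q z * ∫ τ in 0..t, u z τ) := by
  rw [← h.heatDefect_one_eq_integral_flux hc ht, ← h.heatDefect_eq_mul ht hx]
  simp [heatDefect, h.initial]

theorem continuousOn_complexPrimitive_flux (h : IsHeatSolWithData q u a f C c) (hc : 0 ≤ c) :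
    ContinuousOn (complexPrimitive f) (Ioi 0) := by
  have hu := h.continuous
  have hq := q.continuous
  have hcont : Continuous fun t => (heatDefect q u t 0 1 : ℂ) := by
    unfold heatDefect
    fun_prop
  exact hcont.continuousOn.congr fun t ht => by
    rw [complexPrimitive, ← h.heatDefect_one_eq_integral_flux hc ht]

theorem continuousOn_complexPrimitive_right (h : IsHeatSolWithData q u a f C c) :
    ContinuousOn (complexPrimitive a) (Ioi 0) := by
  have hu := h.continuous
  have hcont : Continuous (complexPrimitive (u 1)) := by
    unfold complexPrimitive
    fun_prop
  exact hcont.continuousOn.congr fun t ht =>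
    (complexPrimitive_congr h.right (le_of_lt ht)).symm

theorem norm_complexPrimitive_flux_le (h : IsHeatSolWithData q u a f C c) (hc : 0 < c)
    (ht : 0 < t) : ‖complexPrimitive f t‖ ≤ C / c * Real.exp (c * t) :=
  norm_complexPrimitive_le hc (fun _ => h.abs_flux_le) ht.le

theorem norm_complexPrimitive_right_le (h : IsHeatSolWithData q u a f C c) (hc : 0 < c)
    (ht : 0 < t) : ‖complexPrimitive a t‖ ≤ C / c * Real.exp (c * t) :=
  norm_complexPrimitive_le hc
    (fun τ hτ => h.right τ hτ ▸ h.abs_le hτ (right_mem_Icc.2 zero_le_one)) ht.le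

theorem hasDerivAt_pairing (hu : Continuous (Function.uncurry u)) {y : ℝ → ℂ} (hy : Continuous y)
    (t : ℝ) : HasDerivAt (fun t => ∫ x in 0..1, complexPrimitive (u x) t * y x)
      (∫ x in (0 : ℝ)..1, (u x t : ℂ) * y x) t := by
  refine HasContinuousParamDeriv.hasDerivAt_intervalIntegral
    (f := fun t x => complexPrimitive (u x) t * y x)
    (f' := fun t x => (u x t : ℂ) * y x) ⟨?_, ?_, fun t x => ?_⟩ 0 1 t
  · unfold Function.uncurry complexPrimitive
    fun_prop
  · unfold Function.uncurry
    fun_prop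
  · exact ((hasDerivAt_integral_zero (by fun_prop) t).ofReal_comp).mul_const _

/-- Green's identity for the primitive of `u` in time and the solution that vanishes at `1`. -/
theorem integral_sub_mul_schrodingerSol (h : IsHeatSolWithData q u a f C c) (hc : 0 ≤ c)
    (ht : 0 < t) (s : ℂ) :
    ∫ x in (0 : ℝ)..1, (u x t - s * complexPrimitive (u x) t) * schrodingerSol q 1 (0, 1) s x =
      leftSol q s 1 * complexPrimitive f t - complexPrimitive a t := by
  have hu := h.continuous
  have hq := q.continuous
  set g : ℝ → ℝ := fun x => u x t + q x * ∫ τ in 0..t, u x τ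
  have hg : Continuous g := by fun_prop
  set w' : ℝ → ℝ := fun x => (∫ τ in 0..t, f τ) + ∫ z in 0..x, g z
  set w : ℝ → ℝ := fun x => x * (∫ τ in 0..t, f τ) + ∫ y in 0..x, ∫ z in 0..y, g z
  have hw' (x : ℝ) : HasDerivAt w' (g x) x := (hasDerivAt_integral_zero hg x).const_add _
  have hw (x : ℝ) : HasDerivAt w (w' x) x :=
    (hasDerivAt_mul_const _).add (hasDerivAt_integral_zero (by fun_prop) x)
  have hwu {x : ℝ} (hx : x ∈ Icc (0 : ℝ) 1) : (w x : ℂ) = complexPrimitive (u x) t :=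
    congrArg _ (h.integral_eq_doublePrimitive hc ht hx).symm
  have hw₁ : (w 1 : ℂ) = complexPrimitive a t :=
    (hwu (right_mem_Icc.2 zero_le_one)).trans (complexPrimitive_congr h.right ht.le)
  have hw₀ : w 0 = 0 := by simp [w]
  have hw'₀ : (w' 0 : ℂ) = complexPrimitive f t := by simp [w', complexPrimitive]
  have hgreen := (isSchrodingerSolOn_schrodingerSol q 1 (0, 1) s (uIcc 0 1)).integral_mul_eq
    hq.continuousOn (fun x _ => (hw x).ofReal_comp) (fun x _ => (hw' x).ofReal_comp) (by fun_prop)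
  rw [hw₁, hw₀, hw'₀, schrodingerSol_self, schrodingerSolDeriv_self,
    schrodingerSol_one_zero] at hgreen
  trans ∫ x in (0 : ℝ)..1, ((g x : ℂ) - (q x + s) * w x) * schrodingerSol q 1 (0, 1) s x
  · refine intervalIntegral.integral_congr fun x hx => ?_
    simp only [hwu (uIcc_of_le (zero_le_one' ℝ) ▸ hx), g, complexPrimitive]
    push_cast
    ring
  · push_cast at hgreen
    linear_combination hgreen

theorem hasDerivAt_pairing_schrodingerSol (h : IsHeatSolWithData q u a f C c) (hc : 0 ≤ c)
    (ht : 0 < t) (s : ℂ) :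
    HasDerivAt (fun t => ∫ x in 0..1, complexPrimitive (u x) t * schrodingerSol q 1 (0, 1) s x)
      (s * (∫ x in 0..1, complexPrimitive (u x) t * schrodingerSol q 1 (0, 1) s x) +
        (leftSol q s 1 * complexPrimitive f t - complexPrimitive a t)) t := by
  have hu := h.continuous
  have hφ := continuous_schrodingerSol q 1 (0, 1) s
  have hpair : Continuous fun x => complexPrimitive (u x) t * schrodingerSol q 1 (0, 1) s x := by
    unfold complexPrimitive
    fun_prop
  refine (hasDerivAt_pairing hu hφ t).congr_deriv ?_
  rw [← h.integral_sub_mul_schrodingerSol hc ht s, ← intervalIntegral.integral_const_mul,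
    ← intervalIntegral.integral_add ((hpair.const_mul s).intervalIntegrable 0 1)]
  · congr! 2
    ring
  · unfold complexPrimitive
    exact Continuous.intervalIntegrable (by fun_prop) 0 1

theorem norm_pairing_le (h : IsHeatSolWithData q u a f C c) (hc : 0 < c) {y : ℝ → ℂ} {B : ℝ}
    (hy : ∀ x ∈ Icc (0 : ℝ) 1, ‖y x‖ ≤ B) (ht : 0 < t) :
    ‖∫ x in (0 : ℝ)..1, complexPrimitive (u x) t * y x‖ ≤ C / c * B * Real.exp (c * t) := by
  have hC := h.const_nonneg
  refine (intervalIntegral.norm_integral_le_of_norm_le_const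
    (C := C / c * Real.exp (c * t) * B) fun x hx => ?_).trans_eq (by norm_num; ring)
  have hx' : x ∈ Icc (0 : ℝ) 1 := Ioc_subset_Icc_self (uIoc_of_le (zero_le_one' ℝ) ▸ hx)
  rw [norm_mul]
  gcongr
  exacts [norm_complexPrimitive_le hc (fun _ hτ => h.abs_le hτ hx') ht.le, hy x hx']

theorem laplaceTransform_right (h : IsHeatSolWithData q u a f C c) (hc : 0 < c) (hs : c < s.re) :
    laplaceTransform (complexPrimitive a) s =
      leftSol q s 1 * laplaceTransform (complexPrimitive f) s := by
  have hφ := continuous_schrodingerSol q 1 (0, 1) s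
  obtain ⟨B, hB⟩ := isCompact_Icc.exists_bound_of_continuousOn hφ.continuousOn
  have hf := h.continuousOn_complexPrimitive_flux hc.le
  have ha := h.continuousOn_complexPrimitive_right
  have hzero := laplaceTransform_eq_zero_of_hasDerivAt
    (g := fun t => leftSol q s 1 * complexPrimitive f t - complexPrimitive a t)
    (C := ‖leftSol q s 1‖ * (C / c) + C / c)
    (hasDerivAt_pairing h.continuous hφ 0).continuousAt.continuousWithinAt
    (by simp [complexPrimitive])
    (fun t ht => h.hasDerivAt_pairing_schrodingerSol hc.le ht s) (by fun_prop)
    (fun t ht => ?_) (fun t ht => h.norm_pairing_le hc hB ht) hs hs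
  · rw [laplaceTransform_const_mul_sub
      (integrableOn_laplace hf (fun t => h.norm_complexPrimitive_flux_le hc) hs)
      (integrableOn_laplace ha (fun t => h.norm_complexPrimitive_right_le hc) hs)] at hzero
    exact (sub_eq_zero.1 hzero).symm
  · calc _ ≤ ‖leftSol q s 1‖ * ‖complexPrimitive f t‖ + ‖complexPrimitive a t‖ := by
          rw [← norm_mul]
          exact norm_sub_le _ _
      _ ≤ ‖leftSol q s 1‖ * (C / c * Real.exp (c * t)) + C / c * Real.exp (c * t) := by
        gcongr
        exacts [h.norm_complexPrimitive_flux_le hc ht, h.norm_complexPrimitive_right_le hc ht]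
      _ = _ := by ring

theorem right_eq_zero_of_complexPrimitive_flux_eq_zero (h : IsHeatSolWithData q u a f C c)
    (hc : 0 < c) (hf : ∀ t > 0, complexPrimitive f t = 0) (ht : 0 < t) : a t = 0 := by
  have hf' (s : ℂ) : laplaceTransform (complexPrimitive f) s = 0 :=
    setIntegral_eq_zero_of_forall_eq_zero fun t ht => by rw [hf t ht, mul_zero]
  have ha : ∀ t > 0, complexPrimitive a t = 0 := fun t =>
    eq_zero_of_laplaceTransform_verticalLine_eq_zero h.continuousOn_complexPrimitive_right
      (fun t => h.norm_complexPrimitive_right_le hc) (lt_add_one c) fun ξ => by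
        rw [h.laplaceTransform_right hc (by simp), hf', mul_zero]
  have hu := h.continuous
  have hderiv : HasDerivAt (fun t => ∫ τ in 0..t, u 1 τ) (u 1 t) t :=
    hasDerivAt_integral_zero (by fun_prop) t
  have hzero : (fun t => ∫ τ in 0..t, u 1 τ) =ᶠ[𝓝 t] fun _ => 0 := by
    filter_upwards [Ioi_mem_nhds ht] with τ hτ
    exact Complex.ofReal_eq_zero.1
      ((complexPrimitive_congr h.right (le_of_lt hτ)).trans (ha τ hτ))
  rw [← h.right t ht]
  exact hderiv.unique ((hasDerivAt_const t 0).congr_of_eventuallyEq hzero)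

theorem leftSol_one_eq {q₁ q₂ : ℝ →ᵇ ℝ} {u₁ u₂ : ℝ → ℝ → ℝ} {C₁ c₁ C₂ c₂ : ℝ}
    (h₁ : IsHeatSolWithData q₁ u₁ a f C₁ c₁) (h₂ : IsHeatSolWithData q₂ u₂ a f C₂ c₂)
    (hc₁ : 0 < c₁) (hc₂ : 0 < c₂) (ha : ∃ t > 0, a t ≠ 0) (s : ℂ) :
    leftSol q₁ s 1 = leftSol q₂ s 1 := by
  by_contra hne
  obtain ⟨t, ht, hat⟩ := ha
  refine hat (h₁.right_eq_zero_of_complexPrimitive_flux_eq_zero hc₁ (fun τ => ?_) ht)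
  refine eq_zero_of_mul_laplaceTransform_eq_zero (b := max c₁ c₂)
    (D := fun s => leftSol q₁ s 1 - leftSol q₂ s 1)
    ((differentiable_schrodingerSol q₁ 0 (0, 1) 1).sub
      (differentiable_schrodingerSol q₂ 0 (0, 1) 1))
    (sub_ne_zero.2 hne) (h₁.continuousOn_complexPrimitive_flux hc₁.le)
    (fun t => h₁.norm_complexPrimitive_flux_le hc₁) fun s hs => ?_
  rw [sub_mul, ← h₁.laplaceTransform_right hc₁ ((le_max_left _ _).trans_lt hs),
    ← h₂.laplaceTransform_right hc₂ ((le_max_right _ _).trans_lt hs), sub_self]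

end IsHeatSolWithData

end BoundaryData

section Extension

variable {q a f : ℝ → ℝ} {u ux uxx ut : ℝ → ℝ → ℝ} {C c : ℝ}

/-- The bounded continuous potential on `ℝ` that agrees with `q` on `[0, 1]` and is constant on
each side of it. -/
noncomputable def extendPotential (hq : ContinuousOn q (Icc 0 1)) : ℝ →ᵇ ℝ :=
  (mkOfCompact ⟨(Icc 0 1).domRestrict q, hq.domRestrict⟩).compContinuous
    ⟨projIcc (0 : ℝ) 1 zero_le_one, continuous_projIcc⟩

theorem eqOn_extendPotential (hq : ContinuousOn q (Icc 0 1)) :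
    EqOn (extendPotential hq) q (Icc 0 1) := fun _ hx =>
  IccExtend_of_mem zero_le_one ((Icc 0 1).domRestrict q) hx

/-- The extension of `u` from `[0, 1] × [0, ∞)` to the plane that is constant outside in each
variable. -/
noncomputable def extendStrip (u : ℝ → ℝ → ℝ) (x t : ℝ) : ℝ :=
  u (projIcc 0 1 zero_le_one x) (max t 0)

theorem extendStrip_of_mem {x t : ℝ} (hx : x ∈ Icc (0 : ℝ) 1) (ht : 0 ≤ t) :
    extendStrip u x t = u x t := by
  rw [extendStrip, projIcc_of_mem _ hx, max_eq_left ht]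

theorem continuous_extendStrip
    (hu : ContinuousOn (fun p : ℝ × ℝ => u p.1 p.2) (Icc 0 1 ×ˢ Ici 0)) :
    Continuous fun p : ℝ × ℝ => extendStrip u p.1 p.2 :=
  hu.comp_continuous (f := fun p : ℝ × ℝ => ((projIcc 0 1 zero_le_one p.1 : ℝ), max p.2 0))
    (by fun_prop) fun p => ⟨Subtype.coe_prop _, le_max_right p.2 0⟩

theorem IsHeatSolution.isInteriorHeatSol_extendStrip (h : IsHeatSolution q a u ux uxx ut)
    (hq : ContinuousOn q (Icc 0 1)) :
    IsInteriorHeatSol (extendPotential hq) (extendStrip u) ux uxx ut := by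
  obtain ⟨-, hux, huxx, -, hut, -, hpde, -, -⟩ := h
  refine ⟨fun x hx t ht => ?_, fun x hx t ht => huxx t ht x (Ioo_subset_Icc_self hx),
    fun x hx t ht => ?_, fun x hx t ht => ?_⟩
  · refine (hux t ht x (Ioo_subset_Icc_self hx)).congr_of_eventuallyEq ?_
    filter_upwards [Icc_mem_nhds hx.1 hx.2] with y hy using extendStrip_of_mem hy ht.le
  · refine (hut x (Ioo_subset_Icc_self hx) t ht).congr_of_eventuallyEq ?_
    filter_upwards [Ici_mem_nhds ht] with s hs
      using extendStrip_of_mem (Ioo_subset_Icc_self hx) hs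
  · rw [eqOn_extendPotential hq (Ioo_subset_Icc_self hx),
      extendStrip_of_mem (Ioo_subset_Icc_self hx) ht.le, hpde x hx t ht]

theorem HeatGrowthBound.abs_sub_le (h : HeatGrowthBound u ux C c) {t x y : ℝ} (ht : 0 ≤ t)
    (hux : ∀ x ∈ Icc (0 : ℝ) 1, HasDerivAt (fun y => u y t) (ux x t) x)
    (hx : x ∈ Icc (0 : ℝ) 1) (hy : y ∈ Icc (0 : ℝ) 1) :
    |u x t - u y t| ≤ C * Real.exp (c * t) * |x - y| :=
  (convex_Icc (0 : ℝ) 1).norm_image_sub_le_of_norm_hasDerivWithin_le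
    (f := fun y => u y t) (fun z hz => (hux z hz).hasDerivWithinAt)
    (fun z hz => (le_add_of_nonneg_left (abs_nonneg _)).trans (h z hz t ht)) hy hx

theorem IsHeatSolution.tendsto_div_flux (h : IsHeatSolution q a u ux uxx ut) {t : ℝ}
    (ht : 0 < t) : Tendsto (fun x => u x t / x) (𝓝[>] 0) (𝓝 (ux 0 t)) := by
  obtain ⟨-, hux, -, -, -, -, -, -, hbdry⟩ := h
  simpa [(hbdry t ht).1, div_eq_inv_mul] using (hux t ht 0 (by simp)).tendsto_slope_zero_right

theorem IsHeatSolution.isHeatSolWithData (h : IsHeatSolution q a u ux uxx ut)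
    (hq : ContinuousOn q (Icc 0 1)) (hB : HeatGrowthBound u ux C c)
    (hf : ∀ t > 0, ux 0 t = f t) :
    IsHeatSolWithData (extendPotential hq) (extendStrip u) a f C c := by
  have hinterior := h.isInteriorHeatSol_extendStrip hq
  have hflux (t : ℝ) (ht : 0 < t) := h.tendsto_div_flux ht
  obtain ⟨hcont, hux, -, -, -, -, -, hinit, hbdry⟩ := h
  refine
    { continuous := continuous_extendStrip hcont
      interior := ⟨ux, uxx, ut, hinterior⟩
      lipschitz := fun t ht x hx y hy => ?_
      initial := fun x => ?_
      left := fun t => ?_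
      right := fun t ht => ?_
      flux := fun t ht => ?_ }
  · rw [extendStrip_of_mem hx ht.le, extendStrip_of_mem hy ht.le]
    exact hB.abs_sub_le ht.le (hux t ht) hx hy
  · rw [extendStrip, max_self]
    exact hinit _ (Subtype.coe_prop _)
  · rcases le_or_gt t 0 with ht | ht
    · rw [extendStrip, max_eq_right ht]
      exact hinit _ (Subtype.coe_prop _)
    · rw [extendStrip_of_mem (by simp) ht.le, (hbdry t ht).1]
  · rw [extendStrip_of_mem (by simp) ht.le, (hbdry t ht).2]
  · rw [← hf t ht]
    refine (hflux t ht).congr' ?_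
    filter_upwards [Ioc_mem_nhdsGT zero_lt_one] with x hx
    rw [extendStrip_of_mem (Ioc_subset_Icc_self hx) ht.le]

theorem IsAdmissiblePulse.exists_ne_zero (ha : IsAdmissiblePulse a) : ∃ t > 0, a t ≠ 0 := by
  by_contra! hzero
  exact ha.2.2 (ae_restrict_of_forall_mem measurableSet_Ioi hzero)

end Extension

theorem flux_at_left_end_determines_potential_given_half_general {q₁ q₂ a : ℝ → ℝ}
    (hq₁ : ContinuousOn q₁ (Icc 0 1)) (hq₂ : ContinuousOn q₂ (Icc 0 1))
    (hhalf : EqOn q₁ q₂ (Icc (1 / 2) 1)) (ha : ∃ t > 0, a t ≠ 0)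
    {u₁ ux₁ uxx₁ ut₁ u₂ ux₂ uxx₂ ut₂ : ℝ → ℝ → ℝ} {C₁ c₁ C₂ c₂ : ℝ}
    (hu₁ : IsHeatSolution q₁ a u₁ ux₁ uxx₁ ut₁) (hu₂ : IsHeatSolution q₂ a u₂ ux₂ uxx₂ ut₂)
    (hc₁ : 0 < c₁) (hb₁ : HeatGrowthBound u₁ ux₁ C₁ c₁)
    (hc₂ : 0 < c₂) (hb₂ : HeatGrowthBound u₂ ux₂ C₂ c₂)
    (hflux : ∀ t > 0, ux₁ 0 t = ux₂ 0 t) : EqOn q₁ q₂ (Icc 0 1) := by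
  have hsol₁ := hu₁.isHeatSolWithData hq₁ hb₁ hflux
  have hsol₂ := hu₂.isHeatSolWithData hq₂ hb₂ fun _ _ => rfl
  have hsub : Icc (1 / 2 : ℝ) 1 ⊆ Icc 0 1 := Icc_subset_Icc_left (by norm_num)
  have hext₁ := eqOn_extendPotential hq₁
  have hext₂ := eqOn_extendPotential hq₂
  have hhalf' : EqOn (extendPotential hq₁) (extendPotential hq₂) (Icc (1 / 2) 1) :=
    (hext₁.mono hsub).trans (hhalf.trans (hext₂.mono hsub).symm)
  have hext : EqOn (extendPotential hq₁) (extendPotential hq₂) (Icc 0 1) :=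
    eqOn_of_leftSol_one_eq hhalf' (hsol₁.leftSol_one_eq hsol₂ hc₁ hc₂ ha)
  exact hext₁.symm.trans (hext.trans hext₂)

/-- if two continuous potentials agree on `[1/2,1]` and the corresponding
classical heat solutions (same admissible pulse `a`) have the same flux at `x = 0` for
all `t > 0`, then the potentials coincide on `[0,1]`. -/
theorem flux_at_left_end_determines_potential_given_half
    (q1 q2 a : ℝ → ℝ)
    (hq1 : ContinuousOn q1 (Set.Icc 0 1)) (hq2 : ContinuousOn q2 (Set.Icc 0 1))
    (hhalf : ∀ x ∈ Set.Icc (1/2 : ℝ) 1, q1 x = q2 x)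
    (ha : IsAdmissiblePulse a)
    (u1 ux1 uxx1 ut1 u2 ux2 uxx2 ut2 : ℝ → ℝ → ℝ)
    (hu1 : IsHeatSolution q1 a u1 ux1 uxx1 ut1)
    (hu2 : IsHeatSolution q2 a u2 ux2 uxx2 ut2)
    (hb1 : ∃ C > (0:ℝ), ∃ c > (0:ℝ), HeatGrowthBound u1 ux1 C c)
    (hb2 : ∃ C > (0:ℝ), ∃ c > (0:ℝ), HeatGrowthBound u2 ux2 C c)
    (hflux : ∀ t > (0:ℝ), ux1 0 t = ux2 0 t) :
    ∀ x ∈ Set.Icc (0:ℝ) 1, q1 x = q2 x := by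
  obtain ⟨⟨_, _, _, hc1, hB1⟩, _, _, _, hc2, hB2⟩ := And.intro hb1 hb2
  exact flux_at_left_end_determines_potential_given_half_general hq1 hq2 hhalf ha.exists_ne_zero
    hu1 hu2 hc1 hB1 hc2 hB2 hflux
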